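/- Let $p$ be a prime, $q$ a power of $p$, and $M\ge 2$ an integer with $\gcd(M,q)=1$. Write $\bar a=a^q$ for $a\in\mathbb F_{q^2}$, extended coefficientwise to polynomials and entrywise to matrices over $\mathbb F_{q^2}$. For $f\in\mathbb F_{q^2}[t]$ of degree $d$ with $f(0)\neq 0$ put $\tilde f(t)=\overline{f(0)}^{-1}t^d\bar f(t^{-1})$; a monic irreducible $f$ with $f(0)\ne 0$ is called SCIM if $\tilde f=f$. Let $\tilde N_M(q,d)$ be the number of SCIM polynomials $f$ of degree $d$ over $\mathbb F_{q^2}$ such that $f(x^M)$ has a SCIM factor of degree $d$. Let $\tilde R_M(q,d)$ be the number of unordered pairs $\{g,\tilde g\}$, where $g$ is a monic irreducible polynomial of degree $d$ over $\mathbb F_{q^2}$ with $g(0)\neq 0$ and $g\neq\tilde g$ such that $g(x^M)$ has an irreducible factor of degree $d$. Let $U(n,q^2)=\{A\in GL(n,\mathbb F_{q^2}) : A\Lambda_n\bar A^{t}=\Lambda_n\}$, where $\Lambda_n$ is the $n\times n$ anti-diagonal matrix with all anti-diagonal entries $1$. A matrix is cyclic if its minimal polynomial equals its characteristic polynomial.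 For $n\ge 1$ let $cC_U^M(n,q)$ be the number of conjugacy classes of $U(n,q^2)$ that consist of cyclic matrices of the form $\alpha^M$ with $\alpha\in U(n,q^2)$. Then, in the formal power series ring $\mathbb Q[[z]]$, $$1+\sum_{n\ge 1} cC_U^M(n,q)\,z^n=\prod_{d\ \mathrm{odd}}(1-z^d)^{-\tilde N_M(q,d)}\cdot\prod_{d\ge 1}(1-z^{2d})^{-\tilde R_M(q,d)},$$ where $d$ runs over the positive odd integers in the first product, and both infinite products converge. -/

import Mathlib

open Polynomial Matrix
open scoped PowerSeries.WithPiTopology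

noncomputable section

/-- `f̃(t) = conj(f(0))⁻¹ · t^(deg f) · f̄(1/t)`, where the conjugation `σ` is applied
coefficientwise. It is only used for `f(0) ≠ 0`. -/
def tildePoly {F : Type*} [Field F] (σ : F →+* F) (f : F[X]) : F[X] :=
  Polynomial.C (σ (f.coeff 0))⁻¹ * (f.map σ).reverse

/-- A self-conjugate irreducible monic (SCIM) polynomial, with nonzero constant term. -/
def IsSCIM {F : Type*} [Field F] (σ : F →+* F) (f : F[X]) : Prop :=
  f.Monic ∧ Irreducible f ∧ f.coeff 0 ≠ 0 ∧ tildePoly σ f = f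

/-- An `M̃`-power polynomial: a SCIM polynomial `f` such that `f(x^M)` has a SCIM factor of
degree `deg f`. -/
def IsMtildePowerPoly {F : Type*} [Field F] (σ : F →+* F) (M : ℕ) (f : F[X]) : Prop :=
  IsSCIM σ f ∧ ∃ g : F[X], IsSCIM σ g ∧ g.natDegree = f.natDegree ∧ g ∣ f.comp (X ^ M)

/-- `Ñ_M(q,d)`: the number of `M̃`-power SCIM polynomials of degree `d`. -/
def NtildeM {F : Type*} [Field F] (σ : F →+* F) (M d : ℕ) : ℕ :=
  Nat.card {f : F[X] // IsMtildePowerPoly σ M f ∧ f.natDegree = d}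

/-- An `M`-power polynomial: a monic irreducible `g` such that `g(x^M)` has an irreducible
factor of degree `deg g`. -/
def IsMPowerPoly {F : Type*} [Field F] (M : ℕ) (g : F[X]) : Prop :=
  g.Monic ∧ Irreducible g ∧
    ∃ h : F[X], Irreducible h ∧ h.natDegree = g.natDegree ∧ h ∣ g.comp (X ^ M)

/-- `R̃_M(q,d)`: the number of unordered pairs `{g, g̃}` with `g` a monic irreducible
degree-`d` `M`-power polynomial, `g(0) ≠ 0` (so that `g̃` makes sense) and `g ≠ g̃`. -/
def RtildeM {F : Type*} [Field F] (σ : F →+* F) (M d : ℕ) : ℕ :=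
  Nat.card {P : Sym2 F[X] // ∃ g : F[X], IsMPowerPoly M g ∧ g.coeff 0 ≠ 0 ∧
    g.natDegree = d ∧ g ≠ tildePoly σ g ∧ P = s(g, tildePoly σ g)}

/-- The anti-diagonal matrix `Λ_n` with all anti-diagonal entries `1`. -/
def antidiagMat (F : Type*) [Field F] (n : ℕ) : Matrix (Fin n) (Fin n) F :=
  Matrix.of fun i j => if (i : ℕ) + (j : ℕ) + 1 = n then 1 else 0

/-- The unitary group `U(n,q²) = {A ∈ GL(n, F) : A · Λ_n · Āᵗ = Λ_n}`, where `Ā` applies `σ`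
entrywise. -/
def unitaryGrp {F : Type*} [Field F] (σ : F →+* F) (n : ℕ) :
    Subgroup (GL (Fin n) F) where
  carrier := {A | (A : Matrix (Fin n) (Fin n) F) * antidiagMat F n *
    ((A : Matrix (Fin n) (Fin n) F).map σ)ᵀ = antidiagMat F n}
  one_mem' := by simp
  mul_mem' := by
    intro A B hA hB
    simp only [Set.mem_setOf_eq] at hA hB ⊢
    rw [Units.val_mul, Matrix.map_mul, Matrix.transpose_mul]
    calc _ = (A : Matrix (Fin n) (Fin n) F) * ((B : Matrix (Fin n) (Fin n) F) *
          antidiagMat F n * ((B : Matrix (Fin n) (Fin n) F).map σ)ᵀ) *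
          ((A : Matrix (Fin n) (Fin n) F).map σ)ᵀ := by simp only [Matrix.mul_assoc]
      _ = _ := by rw [hB, hA]
  inv_mem' := by
    intro A hA
    simp only [Set.mem_setOf_eq] at hA ⊢
    have h1 : ((A⁻¹ : GL (Fin n) F) : Matrix (Fin n) (Fin n) F) * A = 1 := A.inv_mul
    have h2 : ((A : Matrix (Fin n) (Fin n) F).map σ)ᵀ *
        (((A⁻¹ : GL (Fin n) F) : Matrix (Fin n) (Fin n) F).map σ)ᵀ = 1 := by
      rw [← Matrix.transpose_mul, ← Matrix.map_mul, h1]; simp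
    calc _ = ((A⁻¹ : GL (Fin n) F) : Matrix (Fin n) (Fin n) F) *
          ((A : Matrix (Fin n) (Fin n) F) * antidiagMat F n *
            ((A : Matrix (Fin n) (Fin n) F).map σ)ᵀ) *
          (((A⁻¹ : GL (Fin n) F) : Matrix (Fin n) (Fin n) F).map σ)ᵀ := by rw [hA]
      _ = (((A⁻¹ : GL (Fin n) F) : Matrix (Fin n) (Fin n) F) * A) * antidiagMat F n *
          (((A : Matrix (Fin n) (Fin n) F).map σ)ᵀ *
            (((A⁻¹ : GL (Fin n) F) : Matrix (Fin n) (Fin n) F).map σ)ᵀ) := by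
          simp only [Matrix.mul_assoc]
      _ = _ := by rw [h1, h2, Matrix.one_mul, Matrix.mul_one]

/-- A matrix is cyclic if its minimal polynomial equals its characteristic polynomial. -/
def IsCyclicMat {F : Type*} [Field F] {n : ℕ} (A : Matrix (Fin n) (Fin n) F) : Prop :=
  minpoly F A = A.charpoly

/-- `cC_U^M(n,q)`: the number of conjugacy classes of the group `U(n,q²)` that consist of cyclic
matrices that are `M`-th powers in `U(n,q²)`. -/
def numCycPowerClasses {F : Type*} [Field F] (σ : F →+* F) (M n : ℕ) : ℕ :=
  Nat.card {c : ConjClasses (unitaryGrp σ n) // ∀ A ∈ c.carrier,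
    IsCyclicMat ((A : GL (Fin n) F) : Matrix (Fin n) (Fin n) F) ∧
      ∃ B : unitaryGrp σ n, B ^ M = A}

end

/-! ### Hilbert 90 and norms for finite commutative rings with involution -/

/-- Some power of an element of a finite monoid, with exponent a positive multiple of a
prescribed one, is idempotent. -/
theorem exists_isIdempotentElem_pow {R : Type*} [Monoid R] [Finite R] (w : R) {m : ℕ}
    (hm : 0 < m) : ∃ k, 0 < k ∧ IsIdempotentElem (w ^ (m * k)) := by
  obtain ⟨i, j, hij, h⟩ := Finite.exists_ne_map_eq_of_infinite (fun n : ℕ => w ^ n)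
  wlog hlt : i < j generalizing i j
  · exact this j i hij.symm h.symm (lt_of_le_of_ne (not_lt.mp hlt) hij.symm)
  have per : ∀ n, i ≤ n → w ^ (n + (j - i)) = w ^ n := by
    intro n hn
    obtain ⟨c, rfl⟩ := Nat.exists_eq_add_of_le hn
    have : i + c + (j - i) = j + c := by omega
    rw [this, pow_add, pow_add]
    rw [h]
  have per' : ∀ s n, i ≤ n → w ^ (n + s * (j - i)) = w ^ n := by
    intro s
    induction s with
    | zero => simp
    | succ s ih =>
      intro n hn
      rw [Nat.succ_mul, ← add_assoc, per _ (by omega), ih n hn]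
  refine ⟨(j - i) * (i + 1), Nat.mul_pos (by omega) (by omega), ?_⟩
  rw [IsIdempotentElem, ← pow_add]
  have h1 : i ≤ m * ((j - i) * (i + 1)) := by
    calc i ≤ 1 * (1 * (i + 1)) := by omega
      _ ≤ m * ((j - i) * (i + 1)) :=
        Nat.mul_le_mul hm (Nat.mul_le_mul_right _ (by omega))
  have h2 : m * ((j - i) * (i + 1)) = (m * (i + 1)) * (j - i) := by ring
  conv_lhs => rw [show m * ((j - i) * (i + 1)) + m * ((j - i) * (i + 1)) =
    m * ((j - i) * (i + 1)) + (m * (i + 1)) * (j - i) by rw [← h2]]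
  exact per' _ _ h1

/-- Hilbert's Theorem 90 for a finite commutative ring with involution `τ`. -/
theorem exists_isUnit_mul_involution_eq_self {R : Type*} [CommRing R] [Finite R] (τ : R →+* R)
    (hτ : ∀ a, τ (τ a) = a) {l : R} (hl : IsUnit (l - τ l)) {u : R} (hu : u * τ u = 1) :
    ∃ v, IsUnit v ∧ u * τ v = v := by
  have huu : IsUnit u := IsUnit.of_mul_eq_one _ hu
  obtain ⟨m, hm, hum⟩ : ∃ m, 0 < m ∧ u ^ m = 1 := by
    obtain ⟨u', rfl⟩ := huu
    exact ⟨orderOf u', orderOf_pos u', by rw [← Units.val_pow_eq_pow_val, pow_orderOf_eq_one]; rfl⟩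
  obtain ⟨k, hk, he⟩ := exists_isIdempotentElem_pow (1 + u) hm
  set e := (1 + u) ^ (m * k) with he_def
  have hw : u * τ (1 + u) = 1 + u := by rw [map_add, map_one, mul_add, hu]; ring
  have hτe : τ e = e := by
    have : (u * τ (1 + u)) ^ (m * k) = (1 + u) ^ (m * k) := by rw [hw]
    rwa [mul_pow, pow_mul u, hum, one_pow, one_mul, ← map_pow] at this
  set a := e + (1 - e) * l with ha
  have hτa : τ a = e + (1 - e) * τ l := by simp [ha, hτe]
  refine ⟨a + u * τ a, ?_, ?_⟩
  · by_contra hv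
    obtain ⟨I, hI, hvI⟩ := exists_max_ideal_of_mem_nonunits hv
    have hp := hI.isPrime
    have hee : e * (1 - e) ∈ I := by
      rw [mul_sub, mul_one, he.eq, sub_self]; exact I.zero_mem
    have key : a + u * τ a = e * (1 + u) + (1 - e) * ((l - τ l) + (1 + u) * τ l) := by
      rw [hτa, ha]; ring
    have hwe : (1 + u) ∈ I ↔ e ∈ I := by
      rw [he_def, hp.pow_mem_iff_mem _ (Nat.mul_pos hm hk)]
    rcases hp.mem_or_mem hee with h | h
    · have hwI := hwe.2 h
      rw [key, I.add_mem_iff_right (I.mul_mem_right _ h)] at hvI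
      rcases hp.mem_or_mem hvI with h' | h'
      · exact hp.ne_top ((I.eq_top_iff_one).2 (by simpa using I.add_mem h h'))
      · rw [I.add_mem_iff_left (I.mul_mem_right _ hwI)] at h'
        exact hp.ne_top (I.eq_top_of_isUnit_mem h' hl)
    · rw [key, I.add_mem_iff_left (I.mul_mem_right _ h)] at hvI
      have he' : e ∈ I := (hp.mem_or_mem hvI).elim id hwe.1
      exact hp.ne_top ((I.eq_top_iff_one).2 (by simpa using I.add_mem he' h))
  · rw [map_add, map_mul, hτ, mul_add, ← mul_assoc, hu]; ring

/-- In a finite commutative ring with involution `τ`, a fixed unit is a norm. -/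
theorem exists_mul_involution_eq {R : Type*} [CommRing R] [Finite R] (τ : R →+* R)
    (hτ : ∀ a, τ (τ a) = a) {l : R} (hl : IsUnit (l - τ l)) {c : R} (hc : IsUnit c)
    (hτc : τ c = c) : ∃ u, u * τ u = c := by
  classical
  let t : Rˣ →* Rˣ := Units.map (τ : R →* R)
  have ht : ∀ a, t (t a) = a := fun a => Units.ext (hτ a)
  let N : Rˣ →* Rˣ := MonoidHom.id _ * t
  let D : Rˣ →* Rˣ := MonoidHom.id _ / t
  have hN : ∀ a, N a = a * t a := fun a => rfl
  have hD : ∀ a, D a = a / t a := fun a => rfl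
  have h1 : N.ker = D.range := by
    ext a
    rw [MonoidHom.mem_ker, MonoidHom.mem_range, hN]
    constructor
    · intro h
      obtain ⟨v, ⟨v, rfl⟩, hv⟩ := exists_isUnit_mul_involution_eq_self τ hτ hl
        (u := (a : R)) (congrArg Units.val h)
      refine ⟨v, ?_⟩
      rw [hD, div_eq_iff_eq_mul]
      exact Units.ext hv.symm
    · rintro ⟨v, rfl⟩
      rw [hD, _root_.map_div, ht]
      simp
  have h2 : N.range ≤ D.ker := by
    rintro _ ⟨v, rfl⟩
    rw [MonoidHom.mem_ker, hN, hD, map_mul, ht, mul_comm, div_self']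
  have h3 : N.range = D.ker := by
    apply Subgroup.eq_of_le_of_card_ge h2
    have e1 := N.ker.card_mul_index
    have e2 := D.ker.card_mul_index
    rw [Subgroup.index_ker] at e1 e2
    rw [h1, ← e2, mul_comm] at e1
    exact (Nat.eq_of_mul_eq_mul_right Nat.card_pos e1).ge
  obtain ⟨c, rfl⟩ := hc
  have : c ∈ D.ker := by
    rw [MonoidHom.mem_ker, hD, div_eq_one]
    exact Units.ext hτc.symm
  rw [← h3] at this
  obtain ⟨u, hu⟩ := this
  exact ⟨u, congrArg Units.val hu⟩

section Lift

variable {P S : Type*} [CommRing P] [Ring S] [Finite S] (ψ : P →+* S) (D : P →+* P)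

/-- Hilbert 90 in the image of a commutative ring `P` in a finite ring, the involution being
induced by an endomorphism `D` of `P`. -/
theorem exists_map_mul_endo_eq_self (hk : ∀ a, ψ a = 0 → ψ (D a) = 0)
    (hD : ∀ a, ψ (D (D a)) = ψ a) {l l' : P} (hl : ψ ((l - D l) * l') = 1) {u : P}
    (hu : ψ (u * D u) = 1) :
    ∃ v v' : P, ψ (v * v') = 1 ∧ ψ (u * D v) = ψ v := by
  have hle : RingHom.ker ψ ≤ (RingHom.ker ψ).comap D := fun a ha => hk a ha
  let τ : P ⧸ RingHom.ker ψ →+* P ⧸ RingHom.ker ψ := Ideal.quotientMap _ D hle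
  have hτ : ∀ a, τ (Ideal.Quotient.mk _ a) = Ideal.Quotient.mk _ (D a) := fun a => rfl
  have hmk : ∀ a b, Ideal.Quotient.mk (RingHom.ker ψ) a = Ideal.Quotient.mk _ b ↔ ψ a = ψ b := by
    intro a b
    rw [Ideal.Quotient.mk_eq_mk_iff_sub_mem, RingHom.mem_ker, map_sub, sub_eq_zero]
  have : Finite (P ⧸ RingHom.ker ψ) :=
    Finite.of_injective _ (RingHom.kerLift_injective ψ)
  obtain ⟨v, hv, h⟩ := exists_isUnit_mul_involution_eq_self τ
    (fun a => by
      obtain ⟨a, rfl⟩ := Ideal.Quotient.mk_surjective a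
      rw [hτ, hτ, hmk, hD]) (l := Ideal.Quotient.mk _ l)
    (IsUnit.of_mul_eq_one (Ideal.Quotient.mk _ l') (by
      rw [hτ, ← map_sub, ← map_mul, ← map_one (Ideal.Quotient.mk _), hmk, hl, map_one]))
    (u := Ideal.Quotient.mk _ u) (by
      rw [hτ, ← map_mul, ← map_one (Ideal.Quotient.mk _), hmk, hu, map_one])
  obtain ⟨v', hv'⟩ := hv.exists_right_inv
  obtain ⟨v, rfl⟩ := Ideal.Quotient.mk_surjective v
  obtain ⟨v', rfl⟩ := Ideal.Quotient.mk_surjective v'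
  refine ⟨v, v', ?_, ?_⟩
  · rwa [← map_mul, ← map_one (Ideal.Quotient.mk _), hmk, map_one] at hv'
  · rwa [hτ, ← map_mul, hmk] at h

/-- Fixed units are norms in the image of a commutative ring `P` in a finite ring, the involution
being induced by an endomorphism `D` of `P`. -/
theorem exists_map_mul_endo_eq (hk : ∀ a, ψ a = 0 → ψ (D a) = 0)
    (hD : ∀ a, ψ (D (D a)) = ψ a) {l l' : P} (hl : ψ ((l - D l) * l') = 1) {c c' : P}
    (hc : ψ (c * c') = 1) (hDc : ψ (D c) = ψ c) :
    ∃ u : P, ψ (u * D u) = ψ c := by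
  have hle : RingHom.ker ψ ≤ (RingHom.ker ψ).comap D := fun a ha => hk a ha
  let τ : P ⧸ RingHom.ker ψ →+* P ⧸ RingHom.ker ψ := Ideal.quotientMap _ D hle
  have hτ : ∀ a, τ (Ideal.Quotient.mk _ a) = Ideal.Quotient.mk _ (D a) := fun a => rfl
  have hmk : ∀ a b, Ideal.Quotient.mk (RingHom.ker ψ) a = Ideal.Quotient.mk _ b ↔ ψ a = ψ b := by
    intro a b
    rw [Ideal.Quotient.mk_eq_mk_iff_sub_mem, RingHom.mem_ker, map_sub, sub_eq_zero]
  have : Finite (P ⧸ RingHom.ker ψ) :=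
    Finite.of_injective _ (RingHom.kerLift_injective ψ)
  obtain ⟨u, h⟩ := exists_mul_involution_eq τ
    (fun a => by
      obtain ⟨a, rfl⟩ := Ideal.Quotient.mk_surjective a
      rw [hτ, hτ, hmk, hD]) (l := Ideal.Quotient.mk _ l)
    (IsUnit.of_mul_eq_one (Ideal.Quotient.mk _ l') (by
      rw [hτ, ← map_sub, ← map_mul, ← map_one (Ideal.Quotient.mk _), hmk, hl, map_one]))
    (c := Ideal.Quotient.mk _ c) (IsUnit.of_mul_eq_one (Ideal.Quotient.mk _ c') (by
      rw [← map_mul, ← map_one (Ideal.Quotient.mk _), hmk, hc, map_one]))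
    (by rw [hτ, hmk, hDc])
  obtain ⟨u, rfl⟩ := Ideal.Quotient.mk_surjective u
  refine ⟨u, ?_⟩
  rwa [hτ, ← map_mul, hmk] at h

end Lift

/-! ### Hermitian matrices over a finite field -/

section Hermitian

variable {F : Type*} [Field F] {ι : Type*} (σ : F →+* F)

/-- The conjugate transpose of a matrix with respect to `σ`. -/
def conjTr (A : Matrix ι ι F) : Matrix ι ι F := (A.map σ)ᵀ

theorem conjTr_conjTr (hσ : ∀ x, σ (σ x) = x) (A : Matrix ι ι F) :
    conjTr σ (conjTr σ A) = A := by ext; simp [conjTr, hσ]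

theorem conjTr_one [DecidableEq ι] : conjTr σ (1 : Matrix ι ι F) = 1 := by simp [conjTr]

theorem conjTr_mul [Fintype ι] (A B : Matrix ι ι F) :
    conjTr σ (A * B) = conjTr σ B * conjTr σ A := by
  simp [conjTr, Matrix.map_mul, Matrix.transpose_mul]

variable [Fintype ι] [DecidableEq ι]

theorem conjTr_inv {A : Matrix ι ι F} (hA : IsUnit A) : conjTr σ A⁻¹ = (conjTr σ A)⁻¹ := by
  symm
  apply Matrix.inv_eq_right_inv
  rw [← conjTr_mul, Matrix.nonsing_inv_mul _ ((Matrix.isUnit_iff_isUnit_det A).1 hA), conjTr_one]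

theorem conjTr_isUnit {A : Matrix ι ι F} (hA : IsUnit A) : IsUnit (conjTr σ A) := by
  obtain ⟨B, hB⟩ := hA.exists_left_inv
  exact IsUnit.of_mul_eq_one (conjTr σ B) (by rw [← conjTr_mul, hB, conjTr_one])

theorem conjTr_aeval (A : Matrix ι ι F) (p : F[X]) :
    conjTr σ (aeval A p) = aeval (conjTr σ A) (p.map σ) := by
  induction p using Polynomial.induction_on' with
  | add p q hp hq =>
    rw [map_add, Polynomial.map_add, map_add, ← hp, ← hq]
    ext; simp [conjTr]
  | monomial k a =>
    rw [Polynomial.map_monomial, aeval_monomial, aeval_monomial, conjTr_mul]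
    have h1 : ∀ k, conjTr σ (A ^ k) = conjTr σ A ^ k := by
      intro k
      induction k with
      | zero => simp [conjTr_one]
      | succ k ih => rw [pow_succ, conjTr_mul, ih, ← pow_succ']
    rw [h1, Algebra.algebraMap_eq_smul_one, Algebra.algebraMap_eq_smul_one]
    have h2 : conjTr σ (a • (1 : Matrix ι ι F)) = σ a • 1 := by
      ext i j
      by_cases h : i = j <;> simp [conjTr, h, Ne.symm]
    rw [h2]; simp

theorem mul_aeval_mul_inv {L : Matrix ι ι F} (hL : IsUnit L) (A : Matrix ι ι F) (p : F[X]) :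
    L * aeval A p * L⁻¹ = aeval (L * A * L⁻¹) p := by
  have hi : L⁻¹ * L = 1 := Matrix.nonsing_inv_mul _ ((Matrix.isUnit_iff_isUnit_det L).1 hL)
  have hi' : L * L⁻¹ = 1 := Matrix.mul_nonsing_inv _ ((Matrix.isUnit_iff_isUnit_det L).1 hL)
  have hp : ∀ k, L * A ^ k * L⁻¹ = (L * A * L⁻¹) ^ k := by
    intro k
    induction k with
    | zero => simp [hi']
    | succ k ih =>
      rw [pow_succ, pow_succ, ← ih]
      calc L * (A ^ k * A) * L⁻¹ = L * A ^ k * 1 * A * L⁻¹ := by simp only [mul_one, mul_assoc]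
        _ = _ := by rw [← hi]; simp only [mul_assoc]
  induction p using Polynomial.induction_on' with
  | add p q hp hq => rw [map_add, map_add, mul_add, add_mul, hp, hq]
  | monomial k a => simp [aeval_monomial, ← hp, Algebra.algebraMap_eq_smul_one]

theorem exists_dvd_X_mul_sub_one {f : F[X]} (hf : f.coeff 0 ≠ 0) : ∃ y : F[X], f ∣ X * y - 1 := by
  refine ⟨Polynomial.C (-(f.coeff 0)⁻¹) * f.divX, Polynomial.C (-(f.coeff 0)⁻¹), ?_⟩
  have h : Polynomial.C (f.coeff 0) * Polynomial.C (f.coeff 0)⁻¹ = 1 := by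
    rw [← Polynomial.C_mul, mul_inv_cancel₀ hf, Polynomial.C_1]
  have h' := Polynomial.X_mul_divX_add f
  rw [Polynomial.C_neg]
  linear_combination (-Polynomial.C (f.coeff 0)⁻¹) * h' + h

theorem charpoly_coeff_zero_ne_zero {A : Matrix ι ι F} (hA : IsUnit A) :
    A.charpoly.coeff 0 ≠ 0 := by
  intro h
  have := Matrix.det_eq_sign_charpoly_coeff A
  rw [h, mul_zero] at this
  exact ((Matrix.isUnit_iff_isUnit_det A).1 hA).ne_zero this

theorem exists_aeval_X_mul_eq_one {A : Matrix ι ι F} (hA : IsUnit A) :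
    ∃ y : F[X], aeval A (X * y) = 1 := by
  obtain ⟨y, g, hy⟩ := exists_dvd_X_mul_sub_one (charpoly_coeff_zero_ne_zero hA)
  refine ⟨y, ?_⟩
  rw [← sub_eq_zero, ← map_one (aeval A : F[X] →ₐ[F] Matrix ι ι F), ← map_sub, hy, map_mul,
    Matrix.aeval_self_charpoly, zero_mul]

/-- Any two invertible hermitian matrices `H`, `L` over a finite field are congruent, through a
polynomial in `H * L⁻¹`. -/
theorem exists_aeval_mul_conjTr_eq [Finite F] (hσ : ∀ x, σ (σ x) = x) {l : F} (hl : σ l ≠ l)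
    {L H : Matrix ι ι F} (hL : IsUnit L) (hLh : conjTr σ L = L) (hH : IsUnit H)
    (hHh : conjTr σ H = H) :
    ∃ p : F[X], aeval (H * L⁻¹) p * L * conjTr σ (aeval (H * L⁻¹) p) = H := by
  have hi : L⁻¹ * L = 1 := Matrix.nonsing_inv_mul _ ((Matrix.isUnit_iff_isUnit_det L).1 hL)
  have hi' : L * L⁻¹ = 1 := Matrix.mul_nonsing_inv _ ((Matrix.isUnit_iff_isUnit_det L).1 hL)
  have hiH' : H * H⁻¹ = 1 := Matrix.mul_nonsing_inv _ ((Matrix.isUnit_iff_isUnit_det H).1 hH)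
  set C := H * L⁻¹ with hC
  have hCunit : IsUnit C := hH.mul (Matrix.isUnit_nonsing_inv_iff.2 hL)
  have hCtw : L * conjTr σ C * L⁻¹ = C := by
    rw [hC, conjTr_mul, conjTr_inv σ hL, hLh, hHh, ← mul_assoc, hi', one_mul]
  have key : ∀ p : F[X], L * conjTr σ (aeval C p) * L⁻¹ = aeval C (p.map σ) := by
    intro p
    rw [conjTr_aeval, mul_aeval_mul_inv hL, hCtw]
  let D : F[X] →+* F[X] := Polynomial.mapRingHom σ
  let ψ : F[X] →+* Matrix ι ι F := (aeval C : F[X] →ₐ[F] Matrix ι ι F)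
  have hψ : ∀ p, ψ p = aeval C p := fun _ => rfl
  have hD : ∀ p, D p = p.map σ := fun _ => rfl
  obtain ⟨c', hc'⟩ : ∃ c' : F[X], ψ (X * c') = 1 := exists_aeval_X_mul_eq_one hCunit
  obtain ⟨u, hu⟩ := exists_map_mul_endo_eq ψ D
    (fun a ha => by
      rw [hψ] at ha
      rw [hψ, hD, ← key, ha]; simp [conjTr])
    (fun a => by
      rw [hD, hD, Polynomial.map_map, show σ.comp σ = RingHom.id F from RingHom.ext hσ,
        Polynomial.map_id])
    (l := Polynomial.C l) (l' := Polynomial.C (l - σ l)⁻¹)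
    (by
      rw [hD, Polynomial.map_C, ← Polynomial.C_sub, ← Polynomial.C_mul,
        mul_inv_cancel₀ (sub_ne_zero.2 hl.symm), Polynomial.C_1, map_one])
    hc' (by rw [hD, Polynomial.map_X])
  refine ⟨u, ?_⟩
  rw [map_mul, hψ, hψ, hψ, hD, ← key, aeval_X] at hu
  calc _ = (aeval C u * (L * conjTr σ (aeval C u) * L⁻¹)) * L := by
        simp only [mul_assoc, hi, mul_one]
    _ = _ := by rw [hu, hC, mul_assoc, hi, mul_one]

end Hermitian

/-! ### Cyclic matrices -/

section Cyclic

variable {F : Type*} [Field F] {n : ℕ}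

theorem isCyclicMat_iff {A : Matrix (Fin n) (Fin n) F} :
    IsCyclicMat A ↔ ∀ p : F[X], p.natDegree < n → aeval A p = 0 → p = 0 := by
  have hint : IsIntegral F A := Matrix.isIntegral A
  have hdeg : A.charpoly.natDegree = n := by simp
  constructor
  · intro h p hp h0
    by_contra hne
    have := Polynomial.natDegree_le_of_dvd (minpoly.dvd F A h0) hne
    rw [h, hdeg] at this
    omega
  · intro h
    have hd : n ≤ (minpoly F A).natDegree := by
      by_contra hlt
      exact minpoly.ne_zero hint (h _ (not_le.1 hlt) (minpoly.aeval F A))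
    exact (Polynomial.eq_of_monic_of_dvd_of_natDegree_le (minpoly.monic hint)
      A.charpoly_monic (minpoly.dvd F A A.aeval_self_charpoly) (by rw [hdeg]; exact hd)).symm

theorem IsCyclicMat.charpoly_dvd_iff {A : Matrix (Fin n) (Fin n) F} (hA : IsCyclicMat A)
    {p : F[X]} : A.charpoly ∣ p ↔ aeval A p = 0 := by
  rw [← (hA : minpoly F A = _), minpoly.dvd_iff]

theorem IsCyclicMat.exists_vector {A : Matrix (Fin n) (Fin n) F} (hA : IsCyclicMat A) :
    ∃ v : Fin n → F, ∀ w, ∃ p : F[X], aeval A p *ᵥ v = w := by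
  have haev : ∀ (p : F[X]) (v : Fin n → F), aeval A.mulVecLin p v = aeval A p *ᵥ v := by
    intro p v
    have := Polynomial.aeval_algHom_apply (Matrix.toLinAlgEquiv' : _ ≃ₐ[F] _) A p
    rw [← Matrix.toLin'_apply]
    exact congrArg (fun φ => φ v) this
  obtain ⟨x, hx⟩ := Module.exists_ker_toSpanSingleton_eq_annihilator F[X]
    (Module.AEval' A.mulVecLin)
  obtain ⟨v, rfl⟩ := (Module.AEval'.of A.mulVecLin).surjective x
  have hv : ∀ p : F[X], aeval A p *ᵥ v = 0 → aeval A p = 0 := by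
    intro p hp
    have h1 : p ∈ (LinearMap.toSpanSingleton F[X] _ (Module.AEval'.of A.mulVecLin v)).ker := by
      rw [LinearMap.mem_ker, LinearMap.toSpanSingleton_apply,
        ← Module.AEval.of_aeval_smul]
      rw [Module.End.smul_def, haev, hp, map_zero]
    rw [hx, Module.mem_annihilator] at h1
    apply Matrix.toLin'.injective
    ext1 i
    ext1
    have h2 := h1 (Module.AEval'.of A.mulVecLin (Pi.single i 1))
    rw [← Module.AEval.of_aeval_smul, Module.End.smul_def, haev,
      LinearEquiv.map_eq_zero_iff] at h2
    simpa using h2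
  refine ⟨v, ?_⟩
  let T : degreeLT F n →ₗ[F] (Fin n → F) :=
    { toFun := fun p => aeval A p.1 *ᵥ v
      map_add' := fun p q => by simp [Matrix.add_mulVec]
      map_smul' := fun c p => by simp [Matrix.smul_mulVec] }
  have hfd : FiniteDimensional F (degreeLT F n) := (degreeLTEquiv F n).symm.finiteDimensional
  have hT : Function.Injective T := by
    rw [injective_iff_map_eq_zero]
    intro p hp
    apply Subtype.ext
    have h1 := hv p.1 hp
    rcases eq_or_ne p.1 0 with h0 | h0
    · exact h0
    · refine isCyclicMat_iff.1 hA p.1 ?_ h1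
      exact (Polynomial.natDegree_lt_iff_degree_lt h0).2 (mem_degreeLT.1 p.2)
  have hs := (LinearMap.injective_iff_surjective_of_finrank_eq_finrank
    (degreeLTEquiv F n).finrank_eq).1 hT
  intro w
  obtain ⟨p, hp⟩ := hs w
  exact ⟨p.1, hp⟩

theorem Commute.aeval_left {S : Type*} [Ring S] [Algebra F S] {a b : S} (h : Commute a b)
    (p : F[X]) : Commute (aeval a p) b := by
  induction p using Polynomial.induction_on' with
  | add p q hp hq => rw [map_add]; exact hp.add_left hq
  | monomial k c =>
    rw [aeval_monomial]
    exact (Algebra.commute_algebraMap_left c b).mul_left (h.pow_left k)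

theorem aeval_eq_zero_of_cyclic_vector {A : Matrix (Fin n) (Fin n) F} {v : Fin n → F}
    (hv : ∀ w, ∃ p : F[X], aeval A p *ᵥ v = w) {B : Matrix (Fin n) (Fin n) F}
    (hB : Commute A B) (h : B *ᵥ v = 0) : B = 0 := by
  apply Matrix.mulVec_injective
  funext w
  obtain ⟨p, rfl⟩ := hv w
  rw [Matrix.mulVec_mulVec, ← (hB.aeval_left p).eq, ← Matrix.mulVec_mulVec, h]
  simp

/-- The commutant of a cyclic matrix consists of the polynomials in it. -/
theorem IsCyclicMat.exists_aeval_eq {A : Matrix (Fin n) (Fin n) F} (hA : IsCyclicMat A)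
    {B : Matrix (Fin n) (Fin n) F} (hB : Commute A B) : ∃ p : F[X], aeval A p = B := by
  obtain ⟨v, hv⟩ := hA.exists_vector
  obtain ⟨p, hp⟩ := hv (B *ᵥ v)
  refine ⟨p, ?_⟩
  rw [← sub_eq_zero]
  refine aeval_eq_zero_of_cyclic_vector hv (Commute.sub_right ?_ hB) ?_
  · exact ((Commute.refl A).aeval_left p).symm
  · rw [Matrix.sub_mulVec, hp, sub_self]

/-- Cyclic matrices with the same characteristic polynomial are similar. -/
theorem IsCyclicMat.exists_similar {A B : Matrix (Fin n) (Fin n) F} (hA : IsCyclicMat A)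
    (hB : IsCyclicMat B) (h : A.charpoly = B.charpoly) :
    ∃ P : Matrix (Fin n) (Fin n) F, IsUnit P ∧ P * A = B * P := by
  obtain ⟨v, hv⟩ := hA.exists_vector
  obtain ⟨w, hw⟩ := hB.exists_vector
  let ev : Matrix (Fin n) (Fin n) F → (Fin n → F) → F[X] →ₗ[F] (Fin n → F) := fun A v =>
    { toFun := fun p => aeval A p *ᵥ v
      map_add' := fun p q => by simp [Matrix.add_mulVec]
      map_smul' := fun c p => by simp [Matrix.smul_mulVec] }
  have hker : ∀ {A : Matrix (Fin n) (Fin n) F} {v : Fin n → F} (_ : IsCyclicMat A)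
      (_ : ∀ w, ∃ p : F[X], aeval A p *ᵥ v = w) (p : F[X]),
      p ∈ LinearMap.ker (ev A v) ↔ A.charpoly ∣ p := by
    intro A v hA hv p
    rw [LinearMap.mem_ker, hA.charpoly_dvd_iff]
    refine ⟨fun h => aeval_eq_zero_of_cyclic_vector hv ?_ h, fun h => ?_⟩
    · exact ((Commute.refl A).aeval_left p).symm
    · change aeval A p *ᵥ v = 0
      rw [h, Matrix.zero_mulVec]
  have hk : LinearMap.ker (ev A v) = LinearMap.ker (ev B w) := by
    ext p
    rw [hker hA hv, hker hB hw, h]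
  let Φ : (Fin n → F) ≃ₗ[F] (Fin n → F) :=
    ((ev A v).quotKerEquivOfSurjective hv).symm ≪≫ₗ
      Submodule.quotEquivOfEq _ _ hk ≪≫ₗ (ev B w).quotKerEquivOfSurjective hw
  have hΦ : ∀ p : F[X], Φ (aeval A p *ᵥ v) = aeval B p *ᵥ w := by
    intro p
    have : ((ev A v).quotKerEquivOfSurjective hv).symm (ev A v p) = Submodule.Quotient.mk p := by
      rw [LinearEquiv.symm_apply_eq]; rfl
    change (ev B w).quotKerEquivOfSurjective hw (Submodule.quotEquivOfEq _ _ hk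
      (((ev A v).quotKerEquivOfSurjective hv).symm (ev A v p))) = _
    rw [this]
    rfl
  refine ⟨LinearMap.toMatrix' Φ.toLinearMap, ?_, ?_⟩
  · refine IsUnit.of_mul_eq_one (LinearMap.toMatrix' Φ.symm.toLinearMap) ?_
    rw [← LinearMap.toMatrix'_comp]
    simp
  · apply Matrix.mulVec_injective
    funext x
    obtain ⟨p, rfl⟩ := hv x
    have hX : ∀ (A : Matrix (Fin n) (Fin n) F), A * aeval A p = aeval A (X * p) := by
      intro A; rw [map_mul, aeval_X]
    rw [← Matrix.mulVec_mulVec, ← Matrix.mulVec_mulVec, LinearMap.toMatrix'_mulVec,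
      LinearMap.toMatrix'_mulVec, Matrix.mulVec_mulVec _ A, hX]
    simp only [LinearEquiv.coe_coe]
    rw [hΦ, hΦ, Matrix.mulVec_mulVec, hX]

theorem aeval_reflect {S : Type*} [Ring S] [Algebra F S] {a b : S} (h : a * b = 1) (N : ℕ)
    {p : F[X]} (hp : p.natDegree ≤ N) : aeval a (reflect N p) = a ^ N * aeval b p := by
  refine Polynomial.induction_with_natDegree_le
    (fun p => aeval a (reflect N p) = a ^ N * aeval b p) N (by simp) ?_ ?_ p hp
  · intro k c _ hk
    have hab : ∀ k, a ^ k * b ^ k = 1 := by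
      intro k
      induction k with
      | zero => simp
      | succ k ih => rw [pow_succ, pow_succ', mul_assoc, ← mul_assoc a, h, one_mul, ih]
    rw [reflect_C_mul_X_pow, revAt_le hk]
    simp only [map_mul, aeval_C, map_pow, aeval_X]
    obtain ⟨m, rfl⟩ := Nat.exists_eq_add_of_le' hk
    rw [Nat.add_sub_cancel, pow_add, Algebra.left_comm, mul_assoc, hab, mul_one]
  · intro p q _ _ hp hq
    rw [reflect_add, map_add, map_add, mul_add, hp, hq]

theorem IsCyclicMat.inv {A : Matrix (Fin n) (Fin n) F} (hA : IsCyclicMat A) (hu : IsUnit A) :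
    IsCyclicMat A⁻¹ := by
  rw [isCyclicMat_iff] at hA ⊢
  intro p hp h0
  have h := aeval_reflect (Matrix.mul_nonsing_inv _ ((Matrix.isUnit_iff_isUnit_det A).1 hu))
    p.natDegree le_rfl (p := p)
  rw [h0, mul_zero] at h
  exact Polynomial.reverse_eq_zero.1
    (hA _ ((Polynomial.reverse_natDegree_le p).trans_lt hp) h)

theorem IsCyclicMat.conjTr (σ : F →+* F) (hσ : ∀ x, σ (σ x) = x) {A : Matrix (Fin n) (Fin n) F}
    (hA : IsCyclicMat A) : IsCyclicMat (conjTr σ A) := by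
  rw [isCyclicMat_iff] at hA ⊢
  intro p hp h0
  have h := conjTr_aeval σ (_root_.conjTr σ A) p
  rw [h0, conjTr_conjTr σ hσ] at h
  have h' := hA (p.map σ) (by rwa [Polynomial.natDegree_map]) (by rw [← h]; simp [_root_.conjTr])
  exact (Polynomial.map_eq_zero σ).1 h'

theorem charpoly_conjTr_inv (σ : F →+* F) {A : Matrix (Fin n) (Fin n) F} (hu : IsUnit A) :
    (conjTr σ A)⁻¹.charpoly = tildePoly σ A.charpoly := by
  have h1 : (conjTr σ A).charpoly = A.charpoly.map σ := by
    rw [conjTr, Matrix.charpoly_transpose, Matrix.charpoly_map]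
  rw [Matrix.charpoly_inv _ (conjTr_isUnit σ hu), ← Matrix.reverse_charpoly, h1, tildePoly,
    Ring.inverse_eq_inv', Matrix.det_eq_sign_charpoly_coeff, h1, Polynomial.coeff_map, mul_inv,
    Polynomial.C_mul, ← mul_assoc]
  congr 2
  have : ((-1 : F) ^ Fintype.card (Fin n))⁻¹ = (-1) ^ Fintype.card (Fin n) := by
    rw [← inv_pow, inv_neg, inv_one]
  rw [this]
  simp [← mul_pow]

/-- Every monic polynomial of degree `n` is the characteristic polynomial of a cyclic matrix. -/
theorem exists_isCyclicMat_charpoly_eq {f : F[X]} (hf : f.Monic) (hn : f.natDegree = n) :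
    ∃ A : Matrix (Fin n) (Fin n) F, IsCyclicMat A ∧ A.charpoly = f := by
  subst hn
  let pb := AdjoinRoot.powerBasis hf.ne_zero
  have hgen : minpoly F pb.gen = f := AdjoinRoot.minpoly_powerBasis_gen_of_monic hf
  have h1 := charpoly_leftMulMatrix pb
  have h2 : minpoly F (Algebra.leftMulMatrix pb.basis pb.gen) = minpoly F pb.gen :=
    minpoly.algHom_eq _ (Algebra.leftMulMatrix_injective pb.basis) _
  refine ⟨Algebra.leftMulMatrix pb.basis pb.gen, h2.trans h1.symm, h1.trans hgen⟩

end Cyclic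

/-! ### Cyclic elements of the unitary group -/

section Unitary

variable {F : Type*} [Field F] {n : ℕ} (σ : F →+* F)

theorem antidiagMat_apply (i j : Fin n) :
    antidiagMat F n i j = if j = i.rev then 1 else 0 := by
  simp only [antidiagMat, Matrix.of_apply, Fin.ext_iff, Fin.val_rev]
  congr 1
  rw [eq_iff_iff]
  omega

theorem antidiagMat_mul_self : antidiagMat F n * antidiagMat F n = 1 := by
  ext i j
  simp only [Matrix.mul_apply, antidiagMat_apply, ite_mul, one_mul, zero_mul,
    Finset.sum_ite_eq', Finset.mem_univ, if_true, Fin.rev_rev, Matrix.one_apply]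
  simp only [eq_comm]

theorem isUnit_antidiagMat : IsUnit (antidiagMat F n) :=
  IsUnit.of_mul_eq_one _ antidiagMat_mul_self

theorem conjTr_antidiagMat : conjTr σ (antidiagMat F n) = antidiagMat F n := by
  ext i j
  simp only [conjTr, Matrix.transpose_apply, Matrix.map_apply, antidiagMat, Matrix.of_apply,
    apply_ite σ, map_one, map_zero]
  congr 1
  rw [eq_iff_iff]
  omega

theorem mem_unitaryGrp_iff {A : GL (Fin n) F} :
    A ∈ unitaryGrp σ n ↔ (A : Matrix (Fin n) (Fin n) F) * antidiagMat F n * conjTr σ A.1 =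
      antidiagMat F n := Iff.rfl

/-- `L A^* L⁻¹ = A⁻¹` for an isometry `A` of the form `L`. -/
theorem mul_conjTr_mul_inv_of_isometry {A L : Matrix (Fin n) (Fin n) F} (hL : IsUnit L)
    (h : A * L * conjTr σ A = L) : L * conjTr σ A * L⁻¹ = A⁻¹ := by
  symm
  apply Matrix.inv_eq_right_inv
  rw [← mul_assoc, ← mul_assoc, h, Matrix.mul_nonsing_inv _ ((Matrix.isUnit_iff_isUnit_det L).1 hL)]

theorem charpoly_eq_of_similar {A B P : Matrix (Fin n) (Fin n) F} (hP : IsUnit P)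
    (h : P * A = B * P) : A.charpoly = B.charpoly := by
  obtain ⟨P, rfl⟩ := hP
  have : B = P.1 * A * P⁻¹.1 := by rw [h, mul_assoc, Units.mul_inv, mul_one]
  rw [this, Matrix.coe_units_inv, Matrix.charpoly_units_conj]

theorem tildePoly_charpoly_of_mem {A : GL (Fin n) F} (hA : A ∈ unitaryGrp σ n) :
    tildePoly σ A.1.charpoly = A.1.charpoly := by
  rw [mem_unitaryGrp_iff] at hA
  rw [← charpoly_conjTr_inv σ A.isUnit]
  refine charpoly_eq_of_similar (isUnit_antidiagMat (F := F) (n := n)) ?_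
  have hu := (Matrix.isUnit_iff_isUnit_det _).1 (conjTr_isUnit σ A.isUnit)
  conv_lhs => rw [← hA]
  rw [mul_assoc, Matrix.mul_nonsing_inv _ hu, mul_one]

/-- The quotient of two forms preserved by `A` commutes with `A`. -/
theorem commute_mul_inv_of_isometry {A L H : Matrix (Fin n) (Fin n) F} (hA : IsUnit A)
    (hL : IsUnit L) (h : A * L * conjTr σ A = L) (h' : A * H * conjTr σ A = H) :
    Commute A (H * L⁻¹) := by
  have h1 := mul_conjTr_mul_inv_of_isometry σ hL h
  have hL' : L⁻¹ * L = 1 := Matrix.nonsing_inv_mul _ ((Matrix.isUnit_iff_isUnit_det L).1 hL)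
  have hA' : A⁻¹ * A = 1 := Matrix.nonsing_inv_mul _ ((Matrix.isUnit_iff_isUnit_det A).1 hA)
  have h2 : H * L⁻¹ = A * (H * L⁻¹) * A⁻¹ := by
    calc H * L⁻¹ = A * H * conjTr σ A * L⁻¹ := by rw [h']
      _ = A * H * (L⁻¹ * L) * conjTr σ A * L⁻¹ := by rw [hL', mul_one]
      _ = A * (H * L⁻¹) * (L * conjTr σ A * L⁻¹) := by simp only [mul_assoc]
      _ = _ := by rw [h1]
  rw [commute_iff_eq]
  conv_rhs => rw [h2]
  rw [mul_assoc _ A⁻¹, hA', mul_one]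

/-- The adjoint of a polynomial in an isometry. -/
theorem mul_conjTr_aeval_mul_inv {A L : Matrix (Fin n) (Fin n) F} (hL : IsUnit L)
    (h : A * L * conjTr σ A = L) (p : F[X]) :
    L * conjTr σ (aeval A p) * L⁻¹ = aeval A⁻¹ (p.map σ) := by
  rw [conjTr_aeval, mul_aeval_mul_inv hL, mul_conjTr_mul_inv_of_isometry σ hL h]

theorem IsCyclicMat.of_similar {A P : Matrix (Fin n) (Fin n) F} (hA : IsCyclicMat A)
    (hP : IsUnit P) : IsCyclicMat (P * A * P⁻¹) := by
  rw [isCyclicMat_iff] at hA ⊢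
  intro p hp h0
  refine hA p hp ?_
  rw [← mul_aeval_mul_inv hP] at h0
  have hP' : P⁻¹ * P = 1 := Matrix.nonsing_inv_mul _ ((Matrix.isUnit_iff_isUnit_det P).1 hP)
  calc aeval A p = (P⁻¹ * P) * aeval A p * (P⁻¹ * P) := by rw [hP', one_mul, mul_one]
    _ = P⁻¹ * (P * aeval A p * P⁻¹) * P := by simp only [mul_assoc]
    _ = 0 := by rw [h0]; simp

/-- Elements of the unitary group that are similar are conjugate in the unitary group. -/
theorem exists_mem_unitaryGrp_conj [Finite F] (hσ : ∀ x, σ (σ x) = x) {l : F} (hl : σ l ≠ l)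
    {A B : GL (Fin n) F} (hA : A ∈ unitaryGrp σ n)
    (hB : B ∈ unitaryGrp σ n) {P : GL (Fin n) F} (hP : P * A = B * P) :
    ∃ Q ∈ unitaryGrp σ n, Q * A = B * Q := by
  rw [mem_unitaryGrp_iff] at hA hB
  set L := antidiagMat F n
  have hL : IsUnit L := isUnit_antidiagMat
  have hLh : conjTr σ L = L := conjTr_antidiagMat σ
  set H := P⁻¹.1 * L * conjTr σ P⁻¹.1 with hHdef
  have hH : IsUnit H := (P⁻¹.isUnit.mul hL).mul (conjTr_isUnit σ P⁻¹.isUnit)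
  have hHh : conjTr σ H = H := by
    rw [hHdef, conjTr_mul, conjTr_mul, conjTr_conjTr σ hσ, hLh, mul_assoc]
  have hAP : A.1 * P⁻¹.1 = P⁻¹.1 * B.1 := by
    have : A * P⁻¹ = P⁻¹ * B := by rw [mul_inv_eq_iff_eq_mul, mul_assoc, ← hP, inv_mul_cancel_left]
    exact congrArg Units.val this
  have hAH : A.1 * H * conjTr σ A.1 = H := by
    have := congrArg (conjTr σ) hAP
    rw [conjTr_mul, conjTr_mul] at this
    calc A.1 * H * conjTr σ A.1 = A.1 * P⁻¹.1 * L * (conjTr σ P⁻¹.1 * conjTr σ A.1) := by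
          rw [hHdef]; simp only [mul_assoc]
      _ = P⁻¹.1 * (B.1 * L * conjTr σ B.1) * conjTr σ P⁻¹.1 := by
          rw [this, hAP]; simp only [mul_assoc]
      _ = H := by rw [hB]
  have hcomm := commute_mul_inv_of_isometry σ A.isUnit hL hA hAH
  obtain ⟨p, hp⟩ := exists_aeval_mul_conjTr_eq σ hσ hl hL hLh hH hHh
  set u := aeval (H * L⁻¹) p
  have hu : IsUnit u := by
    obtain ⟨H', hH'⟩ := hH.exists_right_inv
    refine IsUnit.of_mul_eq_one (L * conjTr σ u * H') ?_
    rw [← mul_assoc, ← mul_assoc, hp, hH']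
  obtain ⟨u', hu'⟩ := hu
  have hPP : P.1 * P⁻¹.1 = 1 := P.mul_inv
  refine ⟨P * u', ?_, ?_⟩
  · rw [mem_unitaryGrp_iff, Units.val_mul, hu', conjTr_mul]
    calc P.1 * u * L * (conjTr σ u * conjTr σ P.1) = P.1 * (u * L * conjTr σ u) * conjTr σ P.1 := by
          simp only [mul_assoc]
      _ = (P.1 * P⁻¹.1) * L * (conjTr σ (P.1 * P⁻¹.1)) := by
          rw [hp, hHdef, conjTr_mul]; simp only [mul_assoc]
      _ = L := by rw [hPP, conjTr_one, one_mul, mul_one]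
  · have : u' * A = A * u' := Units.ext (by
      rw [Units.val_mul, Units.val_mul, hu']
      exact (hcomm.symm.aeval_left p).eq)
    rw [mul_assoc, this, ← mul_assoc, hP, mul_assoc]

/-- A self-conjugate polynomial is the characteristic polynomial of a cyclic element of the
unitary group. -/
theorem exists_mem_unitaryGrp_charpoly_eq [Finite F] (hσ : ∀ x, σ (σ x) = x) {l : F} (hl : σ l ≠ l)
    {f : F[X]} (hf : f.Monic) (hn : f.natDegree = n)
    (h0 : f.coeff 0 ≠ 0) (ht : tildePoly σ f = f) :
    ∃ A ∈ unitaryGrp σ n, IsCyclicMat A.1 ∧ A.1.charpoly = f := by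
  obtain ⟨A, hcyc, hAf⟩ := exists_isCyclicMat_charpoly_eq hf hn
  have hAu : IsUnit A := by
    rw [Matrix.isUnit_iff_isUnit_det, isUnit_iff_ne_zero, Matrix.det_eq_sign_charpoly_coeff, hAf]
    exact mul_ne_zero (pow_ne_zero _ (neg_ne_zero.2 one_ne_zero)) h0
  have hAs : conjTr σ A * (conjTr σ A)⁻¹ = 1 :=
    Matrix.mul_nonsing_inv _ ((Matrix.isUnit_iff_isUnit_det _).1 (conjTr_isUnit σ hAu))
  have hAs' : (conjTr σ A)⁻¹ * conjTr σ A = 1 :=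
    Matrix.nonsing_inv_mul _ ((Matrix.isUnit_iff_isUnit_det _).1 (conjTr_isUnit σ hAu))
  -- a form preserved by `A`
  obtain ⟨H₀, hH₀, hsim⟩ := ((hcyc.conjTr σ hσ).inv (conjTr_isUnit σ hAu)).exists_similar hcyc
    (by rw [charpoly_conjTr_inv σ hAu, hAf, ht])
  have hAH₀ : A * H₀ * conjTr σ A = H₀ := by rw [← hsim, mul_assoc, hAs', mul_one]
  have hAH₀' : A * conjTr σ H₀ * conjTr σ A = conjTr σ H₀ := by
    have := congrArg (conjTr σ) hAH₀
    rwa [conjTr_mul, conjTr_mul, conjTr_conjTr σ hσ, ← mul_assoc] at this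
  have hi : H₀⁻¹ * H₀ = 1 := Matrix.nonsing_inv_mul _ ((Matrix.isUnit_iff_isUnit_det _).1 hH₀)
  have hi' : H₀ * H₀⁻¹ = 1 := Matrix.mul_nonsing_inv _ ((Matrix.isUnit_iff_isUnit_det _).1 hH₀)
  obtain ⟨w, hw⟩ := hcyc.exists_aeval_eq (commute_mul_inv_of_isometry σ hAu hH₀ hAH₀ hAH₀')
  obtain ⟨y, hy⟩ := exists_aeval_X_mul_eq_one hAu
  have hyA : aeval A y = A⁻¹ := by
    symm
    apply Matrix.inv_eq_right_inv
    rwa [map_mul, aeval_X] at hy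
  let D : F[X] →+* F[X] := (Polynomial.compRingHom y).comp (Polynomial.mapRingHom σ)
  let ψ : F[X] →+* Matrix (Fin n) (Fin n) F := (aeval A : F[X] →ₐ[F] Matrix (Fin n) (Fin n) F)
  have hψ : ∀ p, ψ p = aeval A p := fun _ => rfl
  have hD : ∀ p, D p = (p.map σ).comp y := fun _ => rfl
  have key₁ : ∀ p : F[X], ψ (D p) = aeval A⁻¹ (p.map σ) := by
    intro p
    rw [hψ, hD, Polynomial.aeval_comp, hyA]
  have key : ∀ p : F[X], ψ (D p) = H₀ * conjTr σ (aeval A p) * H₀⁻¹ := by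
    intro p
    rw [key₁, mul_conjTr_aeval_mul_inv σ hH₀ hAH₀]
  have hyσ : aeval A⁻¹ (y.map σ) = A := by
    have h1 := key (X * y)
    rw [hy, conjTr_one, mul_one, hi', key₁, Polynomial.map_mul, Polynomial.map_X, map_mul,
      aeval_X] at h1
    calc aeval A⁻¹ (y.map σ) = A * A⁻¹ * aeval A⁻¹ (y.map σ) := by
          rw [Matrix.mul_nonsing_inv _ ((Matrix.isUnit_iff_isUnit_det _).1 hAu), one_mul]
      _ = A := by rw [mul_assoc, h1, mul_one]
  obtain ⟨v, v', hvv, hv⟩ := exists_map_mul_endo_eq_self ψ D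
    (fun a ha => by
      rw [hψ] at ha
      rw [key, ha]; simp [conjTr])
    (fun a => by
      rw [key₁, hD, Polynomial.map_comp, Polynomial.map_map,
        show σ.comp σ = RingHom.id F from RingHom.ext hσ, Polynomial.map_id,
        Polynomial.aeval_comp, hyσ, hψ])
    (l := Polynomial.C l) (l' := Polynomial.C (l - σ l)⁻¹)
    (by
      rw [hD, Polynomial.map_C, Polynomial.C_comp, ← Polynomial.C_sub, ← Polynomial.C_mul,
        mul_inv_cancel₀ (sub_ne_zero.2 hl.symm), Polynomial.C_1, map_one])
    (u := w)
    (by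
      rw [map_mul, key, hψ, hw, conjTr_mul, conjTr_conjTr σ hσ]
      calc conjTr σ H₀ * H₀⁻¹ * (H₀ * (conjTr σ H₀⁻¹ * H₀) * H₀⁻¹)
          = conjTr σ H₀ * (H₀⁻¹ * H₀) * conjTr σ H₀⁻¹ * (H₀ * H₀⁻¹) := by simp only [mul_assoc]
        _ = 1 := by rw [hi, hi', mul_one, mul_one, ← conjTr_mul, hi, conjTr_one])
  rw [map_mul, key, hψ, hψ, hw] at hv
  set V := aeval A v
  have hVu : IsUnit V := IsUnit.of_mul_eq_one (aeval A v') (by rw [← map_mul]; exact hvv)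
  have hHu : IsUnit (V * H₀) := hVu.mul hH₀
  have hHh : conjTr σ (V * H₀) = V * H₀ := by
    rw [conjTr_mul]
    calc conjTr σ H₀ * conjTr σ V
        = conjTr σ H₀ * (H₀⁻¹ * H₀) * conjTr σ V * (H₀⁻¹ * H₀) := by
          rw [hi, mul_one, mul_one]
      _ = conjTr σ H₀ * H₀⁻¹ * (H₀ * conjTr σ V * H₀⁻¹) * H₀ := by simp only [mul_assoc]
      _ = V * H₀ := by rw [hv]
  have hAH : A * (V * H₀) * conjTr σ A = V * H₀ := by
    rw [← mul_assoc, ← ((Commute.refl A).aeval_left v).eq, mul_assoc, mul_assoc, ← mul_assoc A,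
      hAH₀]
  obtain ⟨p, hp⟩ := exists_aeval_mul_conjTr_eq σ hσ hl (isUnit_antidiagMat (F := F) (n := n))
    (conjTr_antidiagMat σ) hHu hHh
  set u := aeval (V * H₀ * (antidiagMat F n)⁻¹) p
  have hu : IsUnit u := by
    obtain ⟨H', hH'⟩ := hHu.exists_right_inv
    refine IsUnit.of_mul_eq_one (antidiagMat F n * conjTr σ u * H') ?_
    rw [← mul_assoc, ← mul_assoc, hp, hH']
  have hui : u⁻¹ * u = 1 := Matrix.nonsing_inv_mul _ ((Matrix.isUnit_iff_isUnit_det _).1 hu)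
  have hui' : u * u⁻¹ = 1 := Matrix.mul_nonsing_inv _ ((Matrix.isUnit_iff_isUnit_det _).1 hu)
  have huiu : IsUnit u⁻¹ := Matrix.isUnit_nonsing_inv_iff.2 hu
  have hinv : u⁻¹⁻¹ = u := Matrix.nonsing_inv_nonsing_inv _ ((Matrix.isUnit_iff_isUnit_det _).1 hu)
  obtain ⟨A', hA'⟩ : IsUnit (u⁻¹ * A * u) := (huiu.mul hAu).mul hu
  refine ⟨A', ?_, ?_, ?_⟩
  · rw [mem_unitaryGrp_iff, hA', conjTr_mul, conjTr_mul]
    calc u⁻¹ * A * u * antidiagMat F n * (conjTr σ u * (conjTr σ A * conjTr σ u⁻¹))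
        = u⁻¹ * (A * (u * antidiagMat F n * conjTr σ u) * conjTr σ A) * conjTr σ u⁻¹ := by
          simp only [mul_assoc]
      _ = (u⁻¹ * u) * antidiagMat F n * conjTr σ (u⁻¹ * u) := by
          rw [hp, hAH, ← hp, conjTr_mul]; simp only [mul_assoc]
      _ = _ := by rw [hui, conjTr_one, one_mul, mul_one]
  · rw [hA']
    simpa only [hinv] using hcyc.of_similar huiu
  · rw [hA', ← hAf]
    refine charpoly_eq_of_similar hu ?_
    rw [← mul_assoc, ← mul_assoc, hui', one_mul]

/-- A cyclic element of the unitary group is an `M`-th power there iff the corresponding congruences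
modulo its characteristic polynomial are solvable. -/
theorem exists_pow_eq_iff {A : unitaryGrp σ n} (hA : IsCyclicMat A.1.1) {y : F[X]}
    (hy : A.1.1.charpoly ∣ X * y - 1) (M : ℕ) :
    (∃ B : unitaryGrp σ n, B ^ M = A) ↔ ∃ b : F[X], A.1.1.charpoly ∣ b ^ M - X ∧
      A.1.1.charpoly ∣ b * (b.map σ).comp y - 1 := by
  have hLi : (antidiagMat F n)⁻¹ * antidiagMat F n = 1 :=
    Matrix.nonsing_inv_mul _ ((Matrix.isUnit_iff_isUnit_det _).1 isUnit_antidiagMat)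
  have hyA : aeval A.1.1 y = A.1.1⁻¹ := by
    symm
    apply Matrix.inv_eq_right_inv
    rwa [hA.charpoly_dvd_iff, map_sub, sub_eq_zero, map_one, map_mul, aeval_X] at hy
  have key : ∀ p : F[X], aeval A.1.1 ((p.map σ).comp y) =
      antidiagMat F n * conjTr σ (aeval A.1.1 p) * (antidiagMat F n)⁻¹ := by
    intro p
    rw [Polynomial.aeval_comp, hyA, mul_conjTr_aeval_mul_inv σ isUnit_antidiagMat A.2]
  simp only [hA.charpoly_dvd_iff, map_sub, sub_eq_zero, map_one, map_mul, key, map_pow, aeval_X]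
  constructor
  · rintro ⟨B, hB⟩
    have hB' : B.1.1 ^ M = A.1.1 := by rw [← hB]; rfl
    obtain ⟨b, hb⟩ := hA.exists_aeval_eq (B := B.1.1)
      (by rw [← hB']; exact (Commute.refl _).pow_left M)
    refine ⟨b, by rw [hb, hB'], ?_⟩
    rw [hb, ← mul_assoc, ← mul_assoc, (mem_unitaryGrp_iff σ).1 B.2,
      Matrix.mul_nonsing_inv _ ((Matrix.isUnit_iff_isUnit_det _).1 isUnit_antidiagMat)]
  · rintro ⟨b, hb, hb'⟩
    obtain ⟨B, hB⟩ := IsUnit.of_mul_eq_one _ hb'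
    have hBU : B ∈ unitaryGrp σ n := by
      rw [mem_unitaryGrp_iff, hB]
      calc _ = aeval A.1.1 b * (antidiagMat F n * conjTr σ (aeval A.1.1 b) *
            (antidiagMat F n)⁻¹) * antidiagMat F n := by simp only [mul_assoc, hLi, mul_one]
        _ = _ := by rw [hb', one_mul]
    refine ⟨⟨B, hBU⟩, ?_⟩
    apply Subtype.ext
    apply Units.ext
    rw [← hb, ← hB]
    rfl

end Unitary

/-! ### The conjugate reciprocal of a polynomial -/

section Tilde

variable {F : Type*} [Field F] (σ : F →+* F)

theorem tildePoly_mul (f g : F[X]) : tildePoly σ (f * g) = tildePoly σ f * tildePoly σ g := by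
  simp only [tildePoly, Polynomial.map_mul, reverse_mul_of_domain, mul_coeff_zero, map_mul,
    mul_inv]
  ring

theorem tildePoly_one : tildePoly σ (1 : F[X]) = 1 := by
  have : reverse (1 : F[X]) = 1 := by rw [← Polynomial.C_1, reverse_C]
  simp [tildePoly, this]

variable {σ} {f g : F[X]}

theorem isUnit_C_coeff_zero (h0 : f.coeff 0 ≠ 0) :
    IsUnit (Polynomial.C (σ (f.coeff 0))⁻¹) :=
  Polynomial.isUnit_C.2 (isUnit_iff_ne_zero.2 (inv_ne_zero ((map_ne_zero σ).2 h0)))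

theorem natDegree_tildePoly (h0 : f.coeff 0 ≠ 0) :
    (tildePoly σ f).natDegree = f.natDegree := by
  have h1 : (f.map σ).coeff 0 ≠ 0 := by rw [coeff_map]; exact (map_ne_zero σ).2 h0
  rw [tildePoly, natDegree_C_mul (inv_ne_zero ((map_ne_zero σ).2 h0)), reverse_natDegree,
    natTrailingDegree_eq_zero.2 (Or.inr h1), Nat.sub_zero, natDegree_map]

theorem monic_tildePoly (h0 : f.coeff 0 ≠ 0) : (tildePoly σ f).Monic := by
  have h1 : (f.map σ).coeff 0 ≠ 0 := by rw [coeff_map]; exact (map_ne_zero σ).2 h0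
  rw [Monic, tildePoly, leadingCoeff_mul, leadingCoeff_C, reverse_leadingCoeff,
    trailingCoeff, natTrailingDegree_eq_zero.2 (Or.inr h1), coeff_map]
  exact inv_mul_cancel₀ ((map_ne_zero σ).2 h0)

theorem coeff_zero_tildePoly (hf : f.Monic) :
    (tildePoly σ f).coeff 0 = (σ (f.coeff 0))⁻¹ := by
  rw [tildePoly, coeff_C_mul, coeff_zero_reverse, (hf.map σ).leadingCoeff, mul_one]

theorem coeff_zero_tildePoly_ne_zero (hf : f.Monic) (h0 : f.coeff 0 ≠ 0) :
    (tildePoly σ f).coeff 0 ≠ 0 := by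
  rw [coeff_zero_tildePoly hf]
  exact inv_ne_zero ((map_ne_zero σ).2 h0)

theorem tildePoly_tildePoly (hσ : ∀ x, σ (σ x) = x) (hf : f.Monic) (h0 : f.coeff 0 ≠ 0) :
    tildePoly σ (tildePoly σ f) = f := by
  have hd : ((tildePoly σ f).map σ).natDegree = f.natDegree := by
    rw [natDegree_map, natDegree_tildePoly h0]
  ext k
  have hc : (tildePoly σ f).coeff (revAt f.natDegree k) = (σ (f.coeff 0))⁻¹ * σ (f.coeff k) := by
    rw [tildePoly, coeff_C_mul, coeff_reverse, natDegree_map, revAt_invol, coeff_map]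
  rw [tildePoly, coeff_C_mul, coeff_reverse, hd, coeff_map, hc, map_mul, hσ,
    coeff_zero_tildePoly hf, map_inv₀, hσ, inv_inv, ← mul_assoc, mul_inv_cancel₀ h0, one_mul]

theorem coeff_zero_ne_zero_of_dvd (h : g ∣ f) (h0 : f.coeff 0 ≠ 0) : g.coeff 0 ≠ 0 := by
  obtain ⟨k, rfl⟩ := h
  rw [mul_coeff_zero] at h0
  exact left_ne_zero_of_mul h0

theorem irreducible_tildePoly (hσ : ∀ x, σ (σ x) = x) (hf : f.Monic) (h0 : f.coeff 0 ≠ 0)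
    (hi : Irreducible f) : Irreducible (tildePoly σ f) := by
  have hunit : ∀ {a : F[X]}, a.coeff 0 ≠ 0 → (IsUnit (tildePoly σ a) ↔ IsUnit a) := by
    intro a ha
    have hne : a ≠ 0 := by rintro rfl; simp at ha
    rw [Polynomial.isUnit_iff_degree_eq_zero, Polynomial.isUnit_iff_degree_eq_zero,
      degree_eq_natDegree hne, degree_eq_natDegree (monic_tildePoly ha).ne_zero,
      natDegree_tildePoly ha]
  refine ⟨fun h => hi.not_isUnit ((hunit h0).1 h), fun a b hab => ?_⟩
  have hab0 := coeff_zero_tildePoly_ne_zero (σ := σ) hf h0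
  have ha := coeff_zero_ne_zero_of_dvd ⟨b, hab⟩ hab0
  have hb := coeff_zero_ne_zero_of_dvd ⟨a, hab.trans (mul_comm a b)⟩ hab0
  have := congrArg (tildePoly σ) hab
  rw [tildePoly_tildePoly hσ hf h0, tildePoly_mul] at this
  exact (hi.isUnit_or_isUnit this).imp (hunit ha).1 (hunit hb).1

theorem tildePoly_dvd (h : g ∣ f) : tildePoly σ g ∣ tildePoly σ f := by
  obtain ⟨k, rfl⟩ := h
  exact ⟨_, tildePoly_mul σ g k⟩

/-- The roots of `f̃` are the conjugate inverses of the roots of `f`. -/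
theorem eval₂_tildePoly_eq_zero_iff {K : Type*} [Field K] (i : F →+* K) (h0 : f.coeff 0 ≠ 0)
    {ρ : K} (hρ : ρ ≠ 0) :
    eval₂ i ρ (tildePoly σ f) = 0 ↔ eval₂ (i.comp σ) ρ⁻¹ f = 0 := by
  let _ : Invertible (ρ⁻¹) := invertibleOfNonzero (inv_ne_zero hρ)
  have h := eval₂_reverse_eq_zero_iff i ρ⁻¹ (f.map σ)
  rw [invOf_eq_inv, inv_inv, eval₂_map] at h
  rw [tildePoly, eval₂_mul, eval₂_C, ← h, mul_eq_zero,
    or_iff_right ((map_ne_zero i).2 (inv_ne_zero ((map_ne_zero σ).2 h0)))]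

/-- If `y` is an inverse of `X` modulo `f̃`, then `p ↦ p̄(y)` maps multiples of `f` to multiples
of `f̃`. -/
theorem tildePoly_dvd_map_comp (h0 : f.coeff 0 ≠ 0) {y : F[X]} (hy : tildePoly σ f ∣ X * y - 1)
    {p : F[X]} (hp : f ∣ p) : tildePoly σ f ∣ (p.map σ).comp y := by
  suffices h : tildePoly σ f ∣ (f.map σ).comp y by
    obtain ⟨k, rfl⟩ := hp
    rw [Polynomial.map_mul, mul_comp]
    exact h.mul_right _
  have hab : AdjoinRoot.mk (tildePoly σ f) X * AdjoinRoot.mk (tildePoly σ f) y = 1 := by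
    rw [← map_mul, ← map_one (AdjoinRoot.mk (tildePoly σ f)), AdjoinRoot.mk_eq_mk]
    exact hy
  have haev : ∀ q r : F[X], aeval (AdjoinRoot.mk (tildePoly σ f) q) r =
      AdjoinRoot.mk (tildePoly σ f) (r.comp q) := by
    intro q r
    rw [← AdjoinRoot.aeval_eq, ← AdjoinRoot.aeval_eq, aeval_comp]
  have h := aeval_reflect hab (f.map σ).natDegree le_rfl (p := f.map σ)
  rw [haev, haev, comp_X] at h
  have hz : AdjoinRoot.mk (tildePoly σ f) (f.map σ).reverse = 0 := by
    rw [AdjoinRoot.mk_eq_zero]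
    rw [tildePoly]
    exact (isUnit_C_coeff_zero h0).mul_left_dvd.2 dvd_rfl
  rw [← reverse, hz] at h
  rw [← AdjoinRoot.mk_eq_zero]
  have hab' := congrArg (· ^ (f.map σ).natDegree) hab
  simp only [mul_pow, one_pow] at hab'
  rw [← one_mul (AdjoinRoot.mk _ _), ← hab', mul_right_comm, ← h, zero_mul]

end Tilde

/-! ### Solving `b ^ M = x`, `b b̃ = 1` modulo an irreducible polynomial -/

section Local

variable {F : Type*} [Field F]

/-- The condition on an irreducible factor of a self-conjugate polynomial under which `x` is a
unitary `M`-th power modulo that polynomial. -/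
def IsPowerFactor (σ : F →+* F) (M : ℕ) (φ : F[X]) : Prop :=
  (tildePoly σ φ = φ → IsMtildePowerPoly σ M φ) ∧ (tildePoly σ φ ≠ φ → IsMPowerPoly M φ)

theorem natDegree_minpoly_pow_le {L : Type*} [Field L] [Algebra F L] [FiniteDimensional F L]
    (η : L) (M : ℕ) : (minpoly F (η ^ M)).natDegree ≤ (minpoly F η).natDegree := by
  rw [← IntermediateField.adjoin.finrank (IsIntegral.of_finite F η),
    ← IntermediateField.adjoin.finrank (IsIntegral.of_finite F (η ^ M))]
  have hle : IntermediateField.adjoin F {η ^ M} ≤ IntermediateField.adjoin F {η} := by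
    rw [IntermediateField.adjoin_simple_le_iff]
    exact pow_mem (IntermediateField.mem_adjoin_simple_self F η) M
  exact Submodule.finrank_mono (s := (IntermediateField.adjoin F {η ^ M}).toSubmodule)
    (t := (IntermediateField.adjoin F {η}).toSubmodule) hle

theorem IsMPowerPoly.of_dvd {M : ℕ} {φ b : F[X]} (hφm : φ.Monic) (hφ : Irreducible φ)
    (h1 : φ ∣ b ^ M - X) :
    IsMPowerPoly M φ ∧ (minpoly F (AdjoinRoot.mk φ b)).natDegree = φ.natDegree ∧
      minpoly F (AdjoinRoot.mk φ b) ∣ φ.comp (X ^ M) := by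
  have := Fact.mk hφ
  have hfd : FiniteDimensional F (AdjoinRoot φ) := (AdjoinRoot.powerBasis hφ.ne_zero).finite
  have hrank : Module.finrank F (AdjoinRoot φ) = φ.natDegree := by
    rw [(AdjoinRoot.powerBasis hφ.ne_zero).finrank, AdjoinRoot.powerBasis_dim]
  set η : AdjoinRoot φ := AdjoinRoot.mk φ b with hη
  have hηM : η ^ M = AdjoinRoot.root φ := by
    rw [hη, ← map_pow, ← AdjoinRoot.mk_X, AdjoinRoot.mk_eq_mk]; exact h1
  have hminroot : minpoly F (AdjoinRoot.root φ) = φ := by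
    rw [AdjoinRoot.minpoly_root hφ.ne_zero, hφm.leadingCoeff, inv_one, Polynomial.C_1, mul_one]
  have hdeg : (minpoly F η).natDegree = φ.natDegree := by
    refine le_antisymm ((minpoly.natDegree_le η).trans hrank.le) ?_
    have := natDegree_minpoly_pow_le (F := F) η M
    rwa [hηM, hminroot] at this
  have hdvd : minpoly F η ∣ φ.comp (X ^ M) := by
    apply minpoly.dvd
    rw [aeval_comp, map_pow, aeval_X, hηM, AdjoinRoot.aeval_eq, AdjoinRoot.mk_self]
  exact ⟨⟨hφm, hφ, _, minpoly.irreducible (IsIntegral.of_finite F η), hdeg, hdvd⟩, hdeg, hdvd⟩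

theorem IsPowerFactor.of_dvd {σ : F →+* F} {M : ℕ} {φ y b : F[X]} (hφm : φ.Monic)
    (hφ : Irreducible φ) (h0 : φ.coeff 0 ≠ 0) (hy : φ ∣ X * y - 1)
    (h1 : φ ∣ b ^ M - X) (h2 : φ ∣ b * (b.map σ).comp y - 1) : IsPowerFactor σ M φ := by
  have := Fact.mk hφ
  have hfd : FiniteDimensional F (AdjoinRoot φ) := (AdjoinRoot.powerBasis hφ.ne_zero).finite
  set η : AdjoinRoot φ := AdjoinRoot.mk φ b with hη
  have hηint : IsIntegral F η := IsIntegral.of_finite F η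
  have hη2 : η * AdjoinRoot.mk φ ((b.map σ).comp y) = 1 := by
    rw [hη, ← map_mul, ← map_one (AdjoinRoot.mk φ), AdjoinRoot.mk_eq_mk]; exact h2
  have hη0 : η ≠ 0 := left_ne_zero_of_mul_eq_one hη2
  obtain ⟨hpow, hdeg, hdvd⟩ := IsMPowerPoly.of_dvd hφm hφ h1
  rw [← hη] at hdeg hdvd
  set h := minpoly F η with hh
  have hirr : Irreducible h := minpoly.irreducible hηint
  refine ⟨fun ht => ⟨⟨hφm, hφ, h0, ht⟩, h, ?_, hdeg, hdvd⟩, fun _ => hpow⟩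
  have hh0 : h.coeff 0 ≠ 0 := minpoly.coeff_zero_ne_zero hηint hη0
  have hhm : h.Monic := minpoly.monic hηint
  refine ⟨hhm, hirr, hh0, ?_⟩
  -- `h(b)` vanishes at `x` modulo `φ`, hence so does its conjugate reciprocal
  have hcomp : φ ∣ h.comp b := by
    rw [← AdjoinRoot.mk_eq_zero, ← AdjoinRoot.aeval_eq, aeval_comp, AdjoinRoot.aeval_eq, ← hη]
    exact minpoly.aeval F η
  have hcomp' := tildePoly_dvd_map_comp (σ := σ) h0 (by rw [ht]; exact hy) hcomp
  rw [ht, Polynomial.map_comp, comp_assoc, ← AdjoinRoot.mk_eq_zero, ← AdjoinRoot.aeval_eq,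
    aeval_comp, AdjoinRoot.aeval_eq, eq_inv_of_mul_eq_one_right hη2, aeval_def, eval₂_map,
    ← eval₂_tildePoly_eq_zero_iff _ hh0 hη0] at hcomp'
  exact Polynomial.eq_of_monic_of_dvd_of_natDegree_le hhm (monic_tildePoly hh0)
    (minpoly.dvd F η hcomp') (natDegree_tildePoly hh0).le

theorem exists_dvd_pow_sub_X {M : ℕ} {φ h : F[X]} (hφm : φ.Monic) (hφ : Irreducible φ)
    (hh : Irreducible h) (hdeg : h.natDegree = φ.natDegree) (hdvd : h ∣ φ.comp (X ^ M)) :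
    ∃ b : F[X], φ ∣ b ^ M - X ∧ ∀ {σ : F →+* F} {y : F[X]}, φ ∣ X * y - 1 → h.coeff 0 ≠ 0 →
      tildePoly σ h = h → φ ∣ b * (b.map σ).comp y - 1 := by
  have := Fact.mk hh
  have hfd : FiniteDimensional F (AdjoinRoot h) := (AdjoinRoot.powerBasis hh.ne_zero).finite
  have hrank : Module.finrank F (AdjoinRoot h) = h.natDegree := by
    rw [(AdjoinRoot.powerBasis hh.ne_zero).finrank, AdjoinRoot.powerBasis_dim]
  set η : AdjoinRoot h := AdjoinRoot.root h with hη
  have hroot : aeval (η ^ M) φ = 0 := by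
    have : aeval η (φ.comp (X ^ M)) = 0 := by
      rw [hη, AdjoinRoot.aeval_eq, AdjoinRoot.mk_eq_zero]; exact hdvd
    rwa [aeval_comp, map_pow, aeval_X] at this
  have hmin : minpoly F (η ^ M) = φ := (minpoly.eq_of_irreducible_of_monic hφ hroot hφm).symm
  have htop : IntermediateField.adjoin F {η ^ M} = ⊤ := by
    apply IntermediateField.eq_of_le_of_finrank_eq le_top
    rw [IntermediateField.adjoin.finrank (IsIntegral.of_finite F _), hmin,
      IntermediateField.finrank_top', hrank, hdeg]
  obtain ⟨b, hb⟩ : ∃ b : F[X], aeval (η ^ M) b = η := by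
    have h1 : η ∈ (IntermediateField.adjoin F {η ^ M}).toSubalgebra := by
      rw [htop]; trivial
    rw [IntermediateField.adjoin_simple_toSubalgebra_of_isAlgebraic
      (IsIntegral.of_finite F (η ^ M)).isAlgebraic,
      Algebra.adjoin_singleton_eq_range_aeval] at h1
    exact h1
  refine ⟨b, ?_, ?_⟩
  · rw [← hmin, minpoly.dvd_iff, map_sub, map_pow, hb, aeval_X, sub_self]
  · intro σ y hy hh0 ht
    have hη0 : η ≠ 0 := by
      intro h'
      have h1 : aeval η h = 0 := by rw [hη, AdjoinRoot.aeval_eq, AdjoinRoot.mk_self]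
      rw [h', aeval_def, eval₂_at_zero] at h1
      exact hh0 ((map_eq_zero _).1 h1)
    have hyv : aeval (η ^ M) y = (η ^ M)⁻¹ := by
      rw [← hmin, minpoly.dvd_iff, map_sub, map_mul, aeval_X, map_one, sub_eq_zero] at hy
      exact eq_inv_of_mul_eq_one_right hy
    have hhz : eval₂ ((algebraMap F (AdjoinRoot h)).comp σ) η⁻¹ h = 0 := by
      rw [← eval₂_tildePoly_eq_zero_iff _ hh0 hη0, ht, ← aeval_def, hη, AdjoinRoot.aeval_eq,
        AdjoinRoot.mk_self]
    obtain ⟨k, hk⟩ : h ∣ b.comp (X ^ M) - X := by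
      rw [← AdjoinRoot.mk_eq_zero, ← AdjoinRoot.aeval_eq, map_sub, aeval_comp, map_pow, aeval_X,
        ← hη, hb, sub_self]
    have hval := congrArg (eval₂ ((algebraMap F (AdjoinRoot h)).comp σ) η⁻¹) hk
    rw [eval₂_mul, hhz, zero_mul, eval₂_sub, eval₂_comp, eval₂_pow, eval₂_X, sub_eq_zero] at hval
    rw [← hmin, minpoly.dvd_iff, map_sub, map_mul, hb, aeval_comp, hyv, map_one, aeval_def,
      eval₂_map, ← inv_pow, hval, mul_inv_cancel₀ hη0, sub_self]

theorem IsPowerFactor.exists_dvd {σ : F →+* F} {M : ℕ} {φ y : F[X]} (h : IsPowerFactor σ M φ)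
    (hy : φ ∣ X * y - 1) : ∃ b : F[X], φ ∣ b ^ M - X ∧
      (tildePoly σ φ = φ → φ ∣ b * (b.map σ).comp y - 1) := by
  by_cases ht : tildePoly σ φ = φ
  · obtain ⟨⟨hm, hi, h0, -⟩, g, ⟨hgm, hgi, hg0, hgt⟩, hdeg, hdvd⟩ := h.1 ht
    obtain ⟨b, hb, hb'⟩ := exists_dvd_pow_sub_X hm hi hgi hdeg hdvd
    exact ⟨b, hb, fun _ => hb' hy hg0 hgt⟩
  · obtain ⟨hm, hi, g, hgi, hdeg, hdvd⟩ := h.2 ht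
    obtain ⟨b, hb, -⟩ := exists_dvd_pow_sub_X hm hi hgi hdeg hdvd
    exact ⟨b, hb, fun h' => absurd h' ht⟩

end Local

section Global

variable {F : Type*} [Field F] {σ : F →+* F}

theorem Polynomial.exists_dvd_pow_of_forall_irreducible {f e : F[X]} (hf : f ≠ 0)
    (h : ∀ φ : F[X], φ.Monic → Irreducible φ → φ ∣ f → φ ∣ e) : ∃ k, f ∣ e ^ k := by
  classical
  have key : ∀ s : Multiset F[X], (∀ φ ∈ s, φ ∣ e) → s.prod ∣ e ^ s.card := by
    intro s
    induction s using Multiset.induction_on with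
    | empty => simp
    | cons a s ih =>
      intro hs
      rw [Multiset.prod_cons, Multiset.card_cons, pow_succ']
      exact mul_dvd_mul (hs a (Multiset.mem_cons_self a s))
        (ih fun φ hφ => hs φ (Multiset.mem_cons_of_mem hφ))
  refine ⟨_, (UniqueFactorizationMonoid.prod_normalizedFactors hf).symm.dvd.trans (key _ ?_)⟩
  intro φ hφ
  have hi := UniqueFactorizationMonoid.irreducible_of_normalized_factor φ hφ
  refine h φ ?_ hi (UniqueFactorizationMonoid.dvd_of_mem_normalizedFactors hφ)
  rw [← UniqueFactorizationMonoid.normalize_normalized_factor φ hφ]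
  exact Polynomial.monic_normalize hi.ne_zero

theorem Polynomial.isCoprime_of_monic_irreducible {φ ψ : F[X]} (hφ : φ.Monic) (hφi : Irreducible φ)
    (hψ : ψ.Monic) (hψi : Irreducible ψ) (h : φ ≠ ψ) : IsCoprime φ ψ := by
  rw [hφi.coprime_iff_not_dvd]
  exact fun hd => h (Polynomial.eq_of_monic_of_associated hφ hψ (hφi.associated_of_dvd hψi hd))

theorem Polynomial.finite_setOf_dvd_monic {f : F[X]} (hf : f ≠ 0) :
    {φ : F[X] | φ.Monic ∧ Irreducible φ ∧ φ ∣ f}.Finite := by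
  classical
  refine (UniqueFactorizationMonoid.normalizedFactors f).toFinset.finite_toSet.subset ?_
  rintro φ ⟨hm, hi, hd⟩
  rw [Finset.mem_coe, Multiset.mem_toFinset]
  exact (UniqueFactorizationMonoid.mem_normalizedFactors_iff' hf).2 ⟨hi, hm.normalize_eq_self, hd⟩

theorem dvd_mul_pow_sub_one {M : ℕ} (hM : M ≠ 0) {φ d y : F[X]} (hy : φ ∣ X * y - 1)
    (hd : φ ∣ d ^ M - y) : φ ∣ X * d ^ (M - 1) * d - 1 := by
  have e : X * d ^ (M - 1) * d - 1 = X * (d ^ M - y) + (X * y - 1) := by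
    rw [← Nat.sub_add_cancel (Nat.one_le_iff_ne_zero.2 hM), pow_succ, Nat.add_sub_cancel]; ring
  rw [e]
  exact dvd_add (hd.mul_left _) hy

theorem dvd_mul_pow_pow_sub_X {M : ℕ} (hM : M ≠ 0) {φ d y : F[X]} (hy : φ ∣ X * y - 1)
    (hd : φ ∣ d ^ M - y) : φ ∣ (X * d ^ (M - 1)) ^ M - X := by
  have h1 := dvd_mul_pow_sub_one hM hy hd
  set z := X * d ^ (M - 1)
  have h3 : φ ∣ (z * d) ^ M - 1 := by
    simpa using h1.trans (sub_dvd_pow_sub_pow _ _ M)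
  have e : z ^ M - X = X * (((z * d) ^ M - 1) - z ^ M * (d ^ M - y)) -
      z ^ M * (X * y - 1) := by ring
  rw [e]
  exact dvd_sub ((dvd_sub h3 (hd.mul_left _)).mul_left _) (hy.mul_left _)

/-- The congruences `b ^ M ≡ X`, `b * b̄(y) ≡ 1` can be solved simultaneously modulo all irreducible
factors of a self-conjugate polynomial. -/
theorem exists_dvd_of_forall_isPowerFactor (hσ : ∀ x, σ (σ x) = x) {M : ℕ}
    (hM : M ≠ 0) {f y : F[X]} (hf : f.Monic) (h0 : f.coeff 0 ≠ 0) (ht : tildePoly σ f = f)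
    (hy : f ∣ X * y - 1)
    (h : ∀ φ : F[X], φ.Monic → Irreducible φ → φ ∣ f → IsPowerFactor σ M φ) :
    ∃ b : F[X], ∀ φ : F[X], φ.Monic → Irreducible φ → φ ∣ f →
      φ ∣ b ^ M - X ∧ φ ∣ b * (b.map σ).comp y - 1 := by
  classical
  let D : F[X] →+* F[X] := (Polynomial.compRingHom y).comp (Polynomial.mapRingHom σ)
  have hD : ∀ p, D p = (p.map σ).comp y := fun _ => rfl
  have hDX : D X = y := by rw [hD, Polynomial.map_X, X_comp]
  let ι := {φ : F[X] // φ.Monic ∧ Irreducible φ ∧ φ ∣ f}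
  have hfin : Finite ι := Polynomial.finite_setOf_dvd_monic hf.ne_zero
  have hφ0 : ∀ φ : ι, φ.1.coeff 0 ≠ 0 := fun φ => coeff_zero_ne_zero_of_dvd φ.2.2.2 h0
  let t : ι → ι := fun φ => ⟨tildePoly σ φ.1, monic_tildePoly (hφ0 φ),
    irreducible_tildePoly hσ φ.2.1 (hφ0 φ) φ.2.2.1, by
      have := tildePoly_dvd (σ := σ) φ.2.2.2
      rwa [ht] at this⟩
  have htt : ∀ φ, t (t φ) = φ := fun φ => Subtype.ext (tildePoly_tildePoly hσ φ.2.1 (hφ0 φ))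
  have hyφ : ∀ φ : ι, φ.1 ∣ X * y - 1 := fun φ => φ.2.2.2.trans hy
  have hDdvd : ∀ (φ : ι) (p : F[X]), φ.1 ∣ p → (t φ).1 ∣ D p := fun φ p hp =>
    tildePoly_dvd_map_comp (hφ0 φ) (hyφ (t φ)) hp
  have hDD : ∀ (φ : ι) (p : F[X]), φ.1 ∣ D (D p) - p := by
    intro φ p
    have h1 : (t (t φ)).1 ∣ D (X * y - 1) := hDdvd (t φ) _ (hyφ (t φ))
    rw [htt, map_sub, map_mul, hDX, map_one] at h1
    have h2 : φ.1 ∣ D y - X := by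
      have e : D y - X = X * (y * D y - 1) - (X * y - 1) * D y := by ring
      rw [e]
      exact dvd_sub (h1.mul_left _) ((hyφ φ).mul_right _)
    have h3 : D (D p) = p.comp (D y) := by
      rw [hD, hD, Polynomial.map_comp, Polynomial.map_map,
        show σ.comp σ = RingHom.id F from RingHom.ext hσ, Polynomial.map_id, comp_assoc, hD]
    have h4 : D y - X ∣ p.comp (D y) - p := by
      have := Polynomial.sub_dvd_eval_sub (D y) X (p.map Polynomial.C)
      rwa [eval_map, eval_map, eval₂_C_X] at this
    rw [h3]
    exact h2.trans h4
  choose c₀ hc₀ hc₀' using fun φ : ι => (h φ.1 φ.2.1 φ.2.2.1 φ.2.2.2).exists_dvd (hyφ φ)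
  obtain ⟨e, he⟩ := exists_injective_nat ι
  -- of two distinct conjugate factors, the choice for the second is dictated by the first
  let c : ι → F[X] := fun φ => if e (t φ) < e φ then X * D (c₀ (t φ)) ^ (M - 1) else c₀ φ
  have hDc : ∀ φ : ι, φ.1 ∣ D (c₀ (t φ)) ^ M - y := by
    intro φ
    have := hDdvd (t φ) _ (hc₀ (t φ))
    rwa [htt, map_sub, map_pow, hDX] at this
  have hpow : ∀ p : F[X], p ^ M = p * p ^ (M - 1) := by
    intro p
    rw [← pow_succ', Nat.sub_add_cancel (Nat.one_le_iff_ne_zero.2 hM)]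
  have hcM : ∀ φ : ι, φ.1 ∣ c φ ^ M - X := by
    intro φ
    simp only [c]
    split_ifs with hlt
    · exact dvd_mul_pow_pow_sub_X hM (hyφ φ) (hDc φ)
    · exact hc₀ φ
  have hcc : ∀ φ : ι, φ.1 ∣ c φ * D (c (t φ)) - 1 := by
    intro φ
    simp only [c]
    rw [htt]
    by_cases heq : t φ = φ
    · rw [heq, if_neg (lt_irrefl _)]
      exact hc₀' φ (congrArg Subtype.val heq)
    · rcases lt_or_gt_of_ne (he.ne heq) with hlt | hlt
      · rw [if_pos hlt, if_neg hlt.not_gt]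
        exact dvd_mul_pow_sub_one hM (hyφ φ) (hDc φ)
      · rw [if_neg hlt.not_gt, if_pos hlt]
        rw [map_mul, hDX, map_pow]
        have h1 := (hDD φ (c₀ φ)).trans (sub_dvd_pow_sub_pow _ _ (M - 1))
        have e : c₀ φ * (y * D (D (c₀ φ)) ^ (M - 1)) - 1 =
          c₀ φ * y * (D (D (c₀ φ)) ^ (M - 1) - c₀ φ ^ (M - 1)) + y * (c₀ φ ^ M - X) +
            (X * y - 1) := by rw [hpow]; ring
        rw [e]
        exact dvd_add (dvd_add (h1.mul_left _) ((hc₀ φ).mul_left _)) (hyφ φ)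
  obtain ⟨b, hb⟩ := Ideal.exists_forall_sub_mem_ideal (I := fun φ : ι => Ideal.span {φ.1})
    (by
      intro φ ψ hne
      rw [Function.onFun, Ideal.isCoprime_span_singleton_iff]
      exact Polynomial.isCoprime_of_monic_irreducible φ.2.1 φ.2.2.1 ψ.2.1 ψ.2.2.1
        (fun h' => hne (Subtype.ext h'))) c
  simp only [Ideal.mem_span_singleton] at hb
  refine ⟨b, fun φ hm hi hd => ?_⟩
  let ψ : ι := ⟨φ, hm, hi, hd⟩
  constructor
  · have e : b ^ M - X = (b ^ M - c ψ ^ M) + (c ψ ^ M - X) := by ring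
    rw [e]
    exact dvd_add ((hb ψ).trans (sub_dvd_pow_sub_pow _ _ M)) (hcM ψ)
  · have h1 := hDdvd (t ψ) _ (hb (t ψ))
    rw [htt, map_sub] at h1
    rw [← hD]
    have e : b * D b - 1 = (b - c ψ) * D b + c ψ * (D b - D (c (t ψ))) +
      (c ψ * D (c (t ψ)) - 1) := by ring
    rw [e]
    exact dvd_add (dvd_add ((hb ψ).mul_right _) (h1.mul_left _)) (hcc ψ)

/-- `X` is a unitary `M`-th power modulo a self-conjugate polynomial iff this holds modulo its
irreducible factors. -/
theorem exists_dvd_iff_forall_isPowerFactor {p : ℕ} [Fact p.Prime] [CharP F p]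
    (hσ : ∀ x, σ (σ x) = x) {M : ℕ} (hM : 2 ≤ M) (hMp : M.Coprime p) {f y : F[X]} (hf : f.Monic)
    (h0 : f.coeff 0 ≠ 0) (ht : tildePoly σ f = f) (hy : f ∣ X * y - 1) :
    (∃ b : F[X], f ∣ b ^ M - X ∧ f ∣ b * (b.map σ).comp y - 1) ↔
      ∀ φ : F[X], φ.Monic → Irreducible φ → φ ∣ f → IsPowerFactor σ M φ := by
  constructor
  · rintro ⟨b, h1, h2⟩ φ hm hi hd
    exact IsPowerFactor.of_dvd hm hi (coeff_zero_ne_zero_of_dvd hd h0) (hd.trans hy)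
      (hd.trans h1) (hd.trans h2)
  intro h
  obtain ⟨b, hb⟩ := exists_dvd_of_forall_isPowerFactor hσ (by omega) hf h0 ht hy h
  let D : F[X] →+* F[X] := (Polynomial.compRingHom y).comp (Polynomial.mapRingHom σ)
  have hD : ∀ p, D p = (p.map σ).comp y := fun _ => rfl
  have hDX : D X = y := by rw [hD, Polynomial.map_X, X_comp]
  obtain ⟨k₁, hk₁⟩ := Polynomial.exists_dvd_pow_of_forall_irreducible hf.ne_zero
    fun φ hm hi hd => (hb φ hm hi hd).1
  obtain ⟨k₂, hk₂⟩ := Polynomial.exists_dvd_pow_of_forall_irreducible hf.ne_zero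
    fun φ hm hi hd => (hb φ hm hi hd).2
  set N := max k₁ k₂
  have hN : N ≤ p ^ N := (Nat.lt_pow_self (Fact.out : p.Prime).one_lt).le
  have h1 : f ∣ (b ^ p ^ N) ^ M - X ^ p ^ N := by
    have := hk₁.trans (pow_dvd_pow _ ((le_max_left _ _).trans hN))
    rwa [sub_pow_char_pow, ← pow_mul, mul_comm, pow_mul] at this
  have h2 : f ∣ b ^ p ^ N * D (b ^ p ^ N) - 1 := by
    have := hk₂.trans (pow_dvd_pow _ ((le_max_right _ _).trans hN))
    rwa [sub_pow_char_pow, one_pow, mul_pow, ← hD, ← map_pow] at this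
  have h3 : f ∣ y * D y - 1 := by
    have := tildePoly_dvd_map_comp (σ := σ) h0 (by rw [ht]; exact hy) hy
    rwa [ht, ← hD, map_sub, map_mul, hDX, map_one] at this
  obtain ⟨a, ha⟩ := Nat.exists_mul_mod_eq_one_of_coprime (Nat.Coprime.pow_left N hMp.symm)
    (by omega : 1 < M)
  obtain ⟨k, hk⟩ : ∃ k, p ^ N * a = M * k + 1 :=
    ⟨p ^ N * a / M, by conv_lhs => rw [← Nat.div_add_mod (p ^ N * a) M, ha.2]⟩
  have mk_iff : ∀ u v : F[X], f ∣ u - v ↔ AdjoinRoot.mk f u = AdjoinRoot.mk f v := fun u v =>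
    (AdjoinRoot.mk_eq_mk).symm
  rw [mk_iff] at h1 h2 h3 hy
  refine ⟨(b ^ p ^ N) ^ a * y ^ k, ?_, ?_⟩
  · rw [mk_iff]
    simp only [map_mul, map_pow, map_one] at h1 h2 h3 hy ⊢
    rw [mul_pow, ← pow_mul _ a, mul_comm a M, pow_mul _ M, h1, ← pow_mul, hk, pow_succ, ← pow_mul,
      mul_comm k M, mul_right_comm, ← mul_pow, hy, one_pow, one_mul]
  · rw [← hD, mk_iff]
    simp only [map_mul, map_pow, map_one] at h1 h2 h3 hy ⊢
    rw [mul_mul_mul_comm, ← mul_pow, h2, ← mul_pow, h3, one_pow, one_pow, one_mul]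

end Global

section Counting

variable {F : Type*} [Field F] {σ : F →+* F}

/-- A self-conjugate irreducible polynomial over the field with `q ^ 2` elements has odd degree. -/
theorem IsSCIM.odd_natDegree {p ℓ : ℕ} [Fact p.Prime] [Fintype F] [CharP F p]
    (hF : Fintype.card F = (p ^ ℓ) ^ 2) (hσ : ∀ x : F, σ x = x ^ p ^ ℓ) {f : F[X]}
    (hf : IsSCIM σ f) : Odd f.natDegree := by
  obtain ⟨hm, hi, h0, ht⟩ := hf
  have := Fact.mk hi
  have hfd : FiniteDimensional F (AdjoinRoot f) := (AdjoinRoot.powerBasis hi.ne_zero).finite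
  have hrank : Module.finrank F (AdjoinRoot f) = f.natDegree := by
    rw [(AdjoinRoot.powerBasis hi.ne_zero).finrank, AdjoinRoot.powerBasis_dim]
  have hfin : Finite (AdjoinRoot f) := Module.finite_of_finite F
  have hchar : CharP (AdjoinRoot f) p := charP_of_injective_algebraMap
    (algebraMap F (AdjoinRoot f)).injective p
  set θ := AdjoinRoot.root f with hθ
  have hθf : aeval θ f = 0 := by rw [hθ, AdjoinRoot.aeval_eq, AdjoinRoot.mk_self]
  have hθ0 : θ ≠ 0 := by
    intro h'
    rw [h', aeval_def, eval₂_at_zero] at hθf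
    exact h0 ((map_eq_zero _).1 hθf)
  have h1 : eval₂ ((algebraMap F (AdjoinRoot f)).comp σ) θ⁻¹ f = 0 := by
    rwa [← eval₂_tildePoly_eq_zero_iff _ h0 hθ0, ht]
  have h2 : eval₂ (algebraMap F (AdjoinRoot f)) (θ⁻¹ ^ p ^ ℓ) f = 0 := by
    have h3 := congrArg (iterateFrobenius (AdjoinRoot f) p ℓ) h1
    rw [hom_eval₂, map_zero, iterateFrobenius_def] at h3
    have h4 : (iterateFrobenius (AdjoinRoot f) p ℓ).comp
        ((algebraMap F (AdjoinRoot f)).comp σ) = algebraMap F (AdjoinRoot f) := by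
      ext a
      rw [RingHom.comp_apply, RingHom.comp_apply, iterateFrobenius_def, hσ, ← map_pow, ← pow_mul,
        ← sq, ← hF, FiniteField.pow_card]
    rwa [h4] at h3
  let s₀ : AdjoinRoot f →ₐ[F] AdjoinRoot f :=
    AdjoinRoot.liftAlgHom f (Algebra.ofId F (AdjoinRoot f)) (θ⁻¹ ^ p ^ ℓ) h2
  have hs₀ : s₀ θ = θ⁻¹ ^ p ^ ℓ := AdjoinRoot.liftAlgHom_root _ _ _ _
  let s : Gal(AdjoinRoot f/F) := AlgEquiv.ofBijective s₀ (AlgHom.bijective s₀)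
  have hs : s θ = θ⁻¹ ^ p ^ ℓ := hs₀
  have hss : s ^ 2 = FiniteField.frobeniusAlgEquivOfAlgebraic F (AdjoinRoot f) := by
    have : (s ^ 2 : Gal(AdjoinRoot f/F)).toAlgHom =
        (FiniteField.frobeniusAlgEquivOfAlgebraic F (AdjoinRoot f)).toAlgHom := by
      apply AdjoinRoot.algHom_ext
      change (s ^ 2) θ = θ ^ Fintype.card F
      rw [sq, AlgEquiv.mul_apply, hs, map_pow, map_inv₀, hs, inv_pow, inv_pow, inv_pow, inv_inv,
        ← pow_mul, ← sq, hF]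
    exact AlgEquiv.ext fun x => congrArg (fun φ : AdjoinRoot f →ₐ[F] AdjoinRoot f => φ x) this
  obtain ⟨i, hi'⟩ := (FiniteField.bijective_frobeniusAlgEquivOfAlgebraic_pow F
    (AdjoinRoot f)).2 s
  simp only at hi'
  rw [← hi', ← pow_mul] at hss
  nth_rewrite 2 [← pow_one (FiniteField.frobeniusAlgEquivOfAlgebraic F (AdjoinRoot f))] at hss
  rw [pow_eq_pow_iff_modEq, FiniteField.orderOf_frobeniusAlgEquivOfAlgebraic] at hss
  rw [← hrank]
  by_contra hodd
  rw [Nat.not_odd_iff_even, even_iff_two_dvd] at hodd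
  have := hss.of_dvd hodd
  simp [Nat.ModEq] at this

/-- The characteristic polynomials of cyclic `M`-th powers in unitary groups. -/
def IsPowerCharpoly (σ : F →+* F) (M : ℕ) (f : F[X]) : Prop :=
  f.Monic ∧ f.coeff 0 ≠ 0 ∧ tildePoly σ f = f ∧
    ∀ φ : F[X], φ.Monic → Irreducible φ → φ ∣ f → IsPowerFactor σ M φ

/-- Conjugacy classes of cyclic `M`-th powers correspond to their characteristic polynomials. -/
theorem numCycPowerClasses_eq_card [Finite F] {p : ℕ} [Fact p.Prime] [CharP F p]
    (hσ : ∀ x, σ (σ x) = x) {l : F} (hl : σ l ≠ l) {M : ℕ} (hM : 2 ≤ M) (hMp : M.Coprime p)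
    (n : ℕ) : numCycPowerClasses σ M n =
      Nat.card {f : F[X] // IsPowerCharpoly σ M f ∧ f.natDegree = n} := by
  have hpow : ∀ A : unitaryGrp σ n, IsCyclicMat A.1.1 →
      ((∃ B : unitaryGrp σ n, B ^ M = A) ↔ IsPowerCharpoly σ M A.1.1.charpoly) := by
    intro A hA
    have h0 := charpoly_coeff_zero_ne_zero A.1.isUnit
    have ht := tildePoly_charpoly_of_mem σ A.2
    obtain ⟨y, hy⟩ := exists_dvd_X_mul_sub_one h0
    rw [exists_pow_eq_iff σ hA hy, exists_dvd_iff_forall_isPowerFactor (p := p) hσ hM hMp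
      (Matrix.charpoly_monic _) h0 ht hy]
    exact ⟨fun h => ⟨Matrix.charpoly_monic _, h0, ht, h⟩, fun h => h.2.2.2⟩
  have hconj : ∀ A B : unitaryGrp σ n, IsConj A B →
      ∃ Q : GL (Fin n) F, B.1.1 = Q.1 * A.1.1 * Q.1⁻¹ := by
    intro A B h
    obtain ⟨c, hc⟩ := isConj_iff.1 h
    refine ⟨c.1, ?_⟩
    rw [← hc, ← Matrix.coe_units_inv]
    rfl
  choose A hA using fun f : {f : F[X] // IsPowerCharpoly σ M f ∧ f.natDegree = n} =>
    exists_mem_unitaryGrp_charpoly_eq σ hσ hl f.2.1.1 f.2.2 f.2.1.2.1 f.2.1.2.2.1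
  symm
  refine Nat.card_eq_of_bijective (fun f => (⟨ConjClasses.mk ⟨A f, (hA f).1⟩, ?_⟩ :
    {c : ConjClasses (unitaryGrp σ n) // ∀ A ∈ c.carrier,
      IsCyclicMat ((A : GL (Fin n) F) : Matrix (Fin n) (Fin n) F) ∧
        ∃ B : unitaryGrp σ n, B ^ M = A})) ⟨?_, ?_⟩
  · intro B hB
    rw [ConjClasses.mem_carrier_iff_mk_eq, ConjClasses.mk_eq_mk_iff_isConj] at hB
    obtain ⟨Q, hQ⟩ := hconj _ _ hB.symm
    have hcyc : IsCyclicMat B.1.1 := by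
      rw [hQ]
      exact (hA f).2.1.of_similar Q.isUnit
    refine ⟨hcyc, (hpow B hcyc).2 ?_⟩
    have : B.1.1.charpoly = f.1 := by
      rw [hQ, Matrix.charpoly_units_conj]
      exact (hA f).2.2
    rw [this]
    exact f.2.1
  · intro f g hfg
    have h := ConjClasses.mk_eq_mk_iff_isConj.1 (congrArg Subtype.val hfg)
    obtain ⟨Q, hQ⟩ := hconj _ _ h
    apply Subtype.ext
    rw [← (hA f).2.2, ← (hA g).2.2]
    simp only at hQ
    rw [hQ, Matrix.charpoly_units_conj]
  · rintro ⟨c, hc⟩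
    obtain ⟨B, rfl⟩ := ConjClasses.exists_rep c
    obtain ⟨hcyc, hB⟩ := hc B ConjClasses.mem_carrier_mk
    let f : {f : F[X] // IsPowerCharpoly σ M f ∧ f.natDegree = n} :=
      ⟨B.1.1.charpoly, (hpow B hcyc).1 hB, by simp⟩
    refine ⟨f, Subtype.ext ?_⟩
    rw [ConjClasses.mk_eq_mk_iff_isConj]
    obtain ⟨P, hP, hPAB⟩ := (hA f).2.1.exists_similar hcyc (hA f).2.2
    obtain ⟨P, rfl⟩ := hP
    obtain ⟨Q, hQ, hQAB⟩ := exists_mem_unitaryGrp_conj σ hσ hl (hA f).1 B.2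
      (P := P) (Units.ext hPAB)
    refine isConj_iff.2 ⟨⟨Q, hQ⟩, Subtype.ext ?_⟩
    exact mul_inv_eq_of_eq_mul hQAB

end Counting

/-! ### Factorization of characteristic polynomials of powers into blocks -/

section Blocks

variable {F : Type*} [Field F] {σ : F →+* F} {M : ℕ}

/-- A block: an `M̃`-power SCIM polynomial, or the product of an `M`-power polynomial with its
distinct conjugate reciprocal. -/
def IsPowerBlock (σ : F →+* F) (M : ℕ) (P : F[X]) : Prop :=
  IsMtildePowerPoly σ M P ∨
    ∃ g : F[X], IsMPowerPoly M g ∧ g.coeff 0 ≠ 0 ∧ g ≠ tildePoly σ g ∧ P = g * tildePoly σ g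

theorem IsMPowerPoly.tildePoly (hσ : ∀ x, σ (σ x) = x) (hM : M ≠ 0) {g : F[X]}
    (hg : IsMPowerPoly M g) (h0 : g.coeff 0 ≠ 0) : IsMPowerPoly M (tildePoly σ g) := by
  obtain ⟨hm, hi, h, hhi, hdeg, hdvd⟩ := hg
  obtain ⟨b, hb, -⟩ := exists_dvd_pow_sub_X hm hi hhi hdeg hdvd
  obtain ⟨y, hy⟩ := exists_dvd_X_mul_sub_one (coeff_zero_tildePoly_ne_zero (σ := σ) hm h0)
  have hd := tildePoly_dvd_map_comp h0 hy hb
  rw [Polynomial.map_sub, Polynomial.map_pow, Polynomial.map_X, sub_comp, pow_comp, X_comp] at hd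
  exact (IsMPowerPoly.of_dvd (monic_tildePoly h0) (irreducible_tildePoly hσ hm h0 hi)
    (dvd_mul_pow_pow_sub_X hM hy hd)).1

theorem isPowerCharpoly_one : IsPowerCharpoly σ M (1 : F[X]) :=
  ⟨monic_one, by simp, tildePoly_one σ, fun _ _ hi hd => absurd (isUnit_of_dvd_one hd) hi.not_isUnit⟩

theorem IsPowerCharpoly.mul {f g : F[X]} (hf : IsPowerCharpoly σ M f)
    (hg : IsPowerCharpoly σ M g) : IsPowerCharpoly σ M (f * g) := by
  obtain ⟨h1, h2, h3, h4⟩ := hf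
  obtain ⟨k1, k2, k3, k4⟩ := hg
  refine ⟨h1.mul k1, by rw [mul_coeff_zero]; exact mul_ne_zero h2 k2,
    by rw [tildePoly_mul, h3, k3], fun φ hm hi hd => ?_⟩
  exact (hi.prime.dvd_or_dvd hd).elim (h4 φ hm hi) (k4 φ hm hi)

theorem IsPowerCharpoly.pow {f : F[X]} (hf : IsPowerCharpoly σ M f) (k : ℕ) :
    IsPowerCharpoly σ M (f ^ k) := by
  induction k with
  | zero => rw [pow_zero]; exact isPowerCharpoly_one
  | succ k ih => rw [pow_succ]; exact ih.mul hf

theorem IsPowerCharpoly.prod {ι : Type*} (s : Finset ι) {f : ι → F[X]}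
    (hf : ∀ i ∈ s, IsPowerCharpoly σ M (f i)) : IsPowerCharpoly σ M (∏ i ∈ s, f i) :=
  Finset.prod_induction f _ (fun _ _ => IsPowerCharpoly.mul) isPowerCharpoly_one hf

theorem IsPowerCharpoly.of_mul_left {f g : F[X]} (hf : IsPowerCharpoly σ M f)
    (hfg : IsPowerCharpoly σ M (f * g)) : IsPowerCharpoly σ M g := by
  obtain ⟨h1, h2, h3, h4⟩ := hf
  obtain ⟨k1, k2, k3, k4⟩ := hfg
  refine ⟨h1.of_mul_monic_left k1, ?_, ?_, fun φ hm hi hd => k4 φ hm hi (hd.mul_left f)⟩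
  · rw [mul_coeff_zero] at k2
    exact right_ne_zero_of_mul k2
  · rw [tildePoly_mul, h3] at k3
    exact mul_left_cancel₀ h1.ne_zero k3

theorem IsPowerBlock.isPowerCharpoly (hσ : ∀ x, σ (σ x) = x) (hM : M ≠ 0) {P : F[X]}
    (hP : IsPowerBlock σ M P) : IsPowerCharpoly σ M P := by
  rcases hP with hP | ⟨g, hg, h0, hne, rfl⟩
  · obtain ⟨hm, hi, h0, ht⟩ := hP.1
    refine ⟨hm, h0, ht, fun φ hφm hφi hd => ?_⟩
    rw [Polynomial.eq_of_monic_of_associated hφm hm (hφi.associated_of_dvd hi hd)]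
    exact ⟨fun _ => hP, fun h => absurd ht h⟩
  · have htt := tildePoly_tildePoly hσ hg.1 h0
    refine ⟨hg.1.mul (monic_tildePoly h0), ?_, ?_, fun φ hφm hφi hd => ?_⟩
    · rw [mul_coeff_zero]
      exact mul_ne_zero h0 (coeff_zero_tildePoly_ne_zero hg.1 h0)
    · rw [tildePoly_mul, htt, mul_comm]
    · rcases hφi.prime.dvd_or_dvd hd with h | h
      · rw [Polynomial.eq_of_monic_of_associated hφm hg.1 (hφi.associated_of_dvd hg.2.1 h)]
        exact ⟨fun h => absurd h.symm hne, fun _ => hg⟩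
      · have hgt := hg.tildePoly hσ hM h0
        rw [Polynomial.eq_of_monic_of_associated hφm hgt.1 (hφi.associated_of_dvd hgt.2.1 h)]
        exact ⟨fun h => absurd (htt.symm.trans h) hne, fun _ => hgt⟩

theorem IsPowerBlock.not_isUnit {P : F[X]} (hP : IsPowerBlock σ M P) : ¬IsUnit P := by
  rcases hP with hP | ⟨g, hg, h0, hne, rfl⟩
  · exact hP.1.2.1.not_isUnit
  · exact fun h => hg.2.1.not_isUnit (isUnit_of_mul_isUnit_left h)

/-- The block of an irreducible polynomial `φ`. -/
theorem IsPowerBlock.eq_of_dvd (hσ : ∀ x, σ (σ x) = x) {P φ : F[X]} (hP : IsPowerBlock σ M P)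
    (hφm : φ.Monic) (hφi : Irreducible φ) (hd : φ ∣ P) :
    (tildePoly σ φ = φ → P = φ) ∧ (tildePoly σ φ ≠ φ → P = φ * tildePoly σ φ) := by
  rcases hP with hP | ⟨g, hg, h0, hne, rfl⟩
  · obtain ⟨hm, hi, h0, ht⟩ := hP.1
    rw [Polynomial.eq_of_monic_of_associated hφm hm (hφi.associated_of_dvd hi hd)]
    exact ⟨fun _ => rfl, fun h => absurd ht h⟩
  · have htt := tildePoly_tildePoly hσ hg.1 h0
    rcases hφi.prime.dvd_or_dvd hd with h | h
    · rw [Polynomial.eq_of_monic_of_associated hφm hg.1 (hφi.associated_of_dvd hg.2.1 h)]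
      exact ⟨fun h => absurd h.symm hne, fun _ => rfl⟩
    · rw [Polynomial.eq_of_monic_of_associated hφm (monic_tildePoly h0)
        (hφi.associated_of_dvd (irreducible_tildePoly hσ hg.1 h0 hg.2.1) h), htt]
      exact ⟨fun h => absurd h hne, fun _ => mul_comm _ _⟩

theorem IsPowerBlock.isCoprime (hσ : ∀ x, σ (σ x) = x) {P Q : F[X]} (hP : IsPowerBlock σ M P)
    (hQ : IsPowerBlock σ M Q) (hne : P ≠ Q) : IsCoprime P Q := by
  classical
  by_contra h
  rw [← EuclideanDomain.gcd_isUnit_iff] at h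
  obtain ⟨φ, hm, hi, hd⟩ := Polynomial.exists_monic_irreducible_factor _ h
  have h1 := hP.eq_of_dvd hσ hm hi (hd.trans (EuclideanDomain.gcd_dvd_left _ _))
  have h2 := hQ.eq_of_dvd hσ hm hi (hd.trans (EuclideanDomain.gcd_dvd_right _ _))
  by_cases ht : tildePoly σ φ = φ
  · exact hne ((h1.1 ht).trans (h2.1 ht).symm)
  · exact hne ((h1.2 ht).trans (h2.2 ht).symm)

theorem IsPowerCharpoly.exists_block_dvd (hσ : ∀ x, σ (σ x) = x) {f : F[X]}
    (hf : IsPowerCharpoly σ M f) (h1 : f ≠ 1) : ∃ P, IsPowerBlock σ M P ∧ P ∣ f := by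
  obtain ⟨hm, h0, ht, hpow⟩ := hf
  obtain ⟨φ, hφm, hφi, hd⟩ := Polynomial.exists_monic_irreducible_factor f
    (fun h => h1 (hm.eq_one_of_isUnit h))
  have hφ := hpow φ hφm hφi hd
  have hφ0 := coeff_zero_ne_zero_of_dvd hd h0
  by_cases htφ : tildePoly σ φ = φ
  · exact ⟨φ, Or.inl (hφ.1 htφ), hd⟩
  · refine ⟨φ * tildePoly σ φ, Or.inr ⟨φ, hφ.2 htφ, hφ0, Ne.symm htφ, rfl⟩, ?_⟩
    have hd' := tildePoly_dvd (σ := σ) hd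
    rw [ht] at hd'
    exact (Polynomial.isCoprime_of_monic_irreducible hφm hφi (monic_tildePoly hφ0)
      (irreducible_tildePoly hσ hφm hφ0 hφi) (Ne.symm htφ)).mul_dvd hd hd'

theorem IsPowerCharpoly.exists_prod_blocks (hσ : ∀ x, σ (σ x) = x) (hM : M ≠ 0) {f : F[X]}
    (hf : IsPowerCharpoly σ M f) : ∃ e : F[X] →₀ ℕ, (∀ P ∈ e.support, IsPowerBlock σ M P) ∧
      e.prod (fun P k => P ^ k) = f := by
  induction hn : f.natDegree using Nat.strong_induction_on generalizing f with
  | _ n ih =>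
  by_cases h1 : f = 1
  · exact ⟨0, by simp, by rw [Finsupp.prod_zero_index, h1]⟩
  obtain ⟨P, hP, g, rfl⟩ := hf.exists_block_dvd hσ h1
  have hPc := hP.isPowerCharpoly hσ hM
  have hg := hPc.of_mul_left hf
  have hdeg : P.natDegree ≠ 0 := fun h0 => hP.not_isUnit (by
    rw [Polynomial.eq_one_of_monic_natDegree_zero hPc.1 h0]; exact isUnit_one)
  obtain ⟨e, he, hprod⟩ := ih g.natDegree (by
    rw [← hn, hPc.1.natDegree_mul hg.1]; omega) hg rfl
  classical
  refine ⟨e + Finsupp.single P 1, fun Q hQ => ?_, ?_⟩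
  · rcases Finset.mem_union.1 (Finsupp.support_add hQ) with h | h
    · exact he Q h
    · rw [Finset.mem_singleton.1 (Finsupp.support_single_subset h)]; exact hP
  · rw [Finsupp.prod_add_index' (by simp) (fun _ _ _ => pow_add _ _ _), hprod,
      Finsupp.prod_single_index (pow_zero P), pow_one, mul_comm]

/-- Exponents in a product of blocks are determined by the product. -/
theorem exponents_eq_of_prod_blocks_eq (hσ : ∀ x, σ (σ x) = x) (hM : M ≠ 0) {S : Finset F[X]}
    (hS : ∀ P ∈ S, IsPowerBlock σ M P) {a b : F[X] → ℕ}
    (h : ∏ P ∈ S, P ^ a P = ∏ P ∈ S, P ^ b P) : ∀ P ∈ S, a P = b P := by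
  classical
  have key : ∀ (a b : F[X] → ℕ), (∏ P ∈ S, P ^ a P = ∏ P ∈ S, P ^ b P) → ∀ P ∈ S,
      ¬ a P < b P := by
    intro a b h P hP hlt
    have hPc := (hS P hP).isPowerCharpoly hσ hM
    rw [← Finset.mul_prod_erase S _ hP, ← Finset.mul_prod_erase S _ hP,
      ← Nat.add_sub_cancel' hlt.le, pow_add, mul_assoc] at h
    have h' := mul_left_cancel₀ (pow_ne_zero _ hPc.1.ne_zero) h
    have hcop : IsCoprime P (∏ Q ∈ S.erase P, Q ^ a Q) := by
      refine IsCoprime.prod_right fun Q hQ => IsCoprime.pow_right ?_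
      exact (hS P hP).isCoprime hσ (hS Q (Finset.mem_of_mem_erase hQ))
        (Finset.ne_of_mem_erase hQ).symm
    have hdvd : P ∣ ∏ Q ∈ S.erase P, Q ^ a Q := by
      rw [h']
      exact (dvd_pow_self P (by omega)).mul_right _
    exact (hS P hP).not_isUnit (hcop.isUnit_of_dvd' dvd_rfl hdvd)
  intro P hP
  exact le_antisymm (not_lt.1 (key b a h.symm P hP)) (not_lt.1 (key a b h P hP))

end Blocks

/-! ### Infinite products of power series -/

section Series

open Filter

theorem PowerSeries.coeff_eq_of_X_pow_dvd_sub {a b : PowerSeries ℚ} {n N : ℕ} (hn : n < N)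
    (h : PowerSeries.X ^ N ∣ a - b) : PowerSeries.coeff n a = PowerSeries.coeff n b := by
  rw [← sub_eq_zero, ← map_sub]
  exact PowerSeries.X_pow_dvd_iff.1 h n hn

theorem PowerSeries.multipliable_of_X_pow_dvd {f : ℕ → PowerSeries ℚ}
    (hf : ∀ k, PowerSeries.X ^ (k + 1) ∣ f k - 1) : Multipliable f := by
  have h : Multipliable (fun k => 1 + (f k - 1)) := by
    apply PowerSeries.WithPiTopology.multipliable_one_add_of_tendsto_order_atTop_nhds_top
    refine ENat.tendsto_nhds_top_iff_natCast_lt.mpr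
      (fun n => Filter.eventually_atTop.mpr ⟨n, fun m hm => ?_⟩)
    refine lt_of_lt_of_le ?_ (PowerSeries.X_pow_dvd_iff.1 (hf m) |> PowerSeries.nat_le_order _ _)
    exact_mod_cast Nat.lt_succ_of_le hm
  simpa using h

theorem PowerSeries.coeff_tprod_of_X_pow_dvd {f : ℕ → PowerSeries ℚ}
    (hf : ∀ k, PowerSeries.X ^ (k + 1) ∣ f k - 1) {n N : ℕ} (hn : n < N) :
    PowerSeries.coeff n (∏' k, f k) = PowerSeries.coeff n (∏ k ∈ Finset.range N, f k) := by
  have h1 := (PowerSeries.multipliable_of_X_pow_dvd hf).hasProd.tendsto_prod_nat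
  have h2 := ((PowerSeries.WithPiTopology.continuous_coeff ℚ n).tendsto _).comp h1
  refine tendsto_nhds_unique h2 (tendsto_const_nhds.congr' ?_)
  refine Filter.eventually_atTop.2 ⟨N, fun m hm => ?_⟩
  refine Nat.le_induction rfl (fun m hm ih => ?_) m hm
  rw [ih]
  simp only [Function.comp_apply]
  rw [Finset.prod_range_succ]
  refine PowerSeries.coeff_eq_of_X_pow_dvd_sub (N := m + 1) (by omega) ?_
  rw [show ∀ a b : PowerSeries ℚ, a - a * b = -a * (b - 1) by intro a b; ring]
  exact (hf m).mul_left _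

theorem PowerSeries.constantCoeff_one_sub_X_pow {w : ℕ} (hw : w ≠ 0) :
    PowerSeries.constantCoeff ((1 : PowerSeries ℚ) - PowerSeries.X ^ w) = 1 := by
  simp [hw]

theorem PowerSeries.inv_pow_one_sub_X_pow (w N : ℕ) :
    (((1 : PowerSeries ℚ) - PowerSeries.X ^ w) ^ N)⁻¹ =
      ((1 - PowerSeries.X ^ w : PowerSeries ℚ)⁻¹) ^ N := by
  induction N with
  | zero => simp
  | succ N ih => rw [pow_succ, pow_succ', PowerSeries.mul_inv_rev, ih]

theorem PowerSeries.X_pow_dvd_inv_sub_one {w : ℕ} (hw : w ≠ 0) (N : ℕ) :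
    PowerSeries.X ^ w ∣ (((1 : PowerSeries ℚ) - PowerSeries.X ^ w) ^ N)⁻¹ - 1 := by
  set u := ((1 : PowerSeries ℚ) - PowerSeries.X ^ w) ^ N with hu
  have h0 : PowerSeries.constantCoeff u ≠ 0 := by
    rw [hu, map_pow, PowerSeries.constantCoeff_one_sub_X_pow hw, one_pow]; exact one_ne_zero
  have h1 : PowerSeries.X ^ w ∣ u - 1 := by
    have := sub_dvd_pow_sub_pow ((1 : PowerSeries ℚ) - PowerSeries.X ^ w) 1 N
    rw [one_pow] at this
    refine (?_ : PowerSeries.X ^ w ∣ _).trans this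
    rw [show (1 : PowerSeries ℚ) - PowerSeries.X ^ w - 1 = -PowerSeries.X ^ w by ring]
    exact (dvd_neg).2 dvd_rfl
  have h2 : u⁻¹ - 1 = -u⁻¹ * (u - 1) := by
    rw [mul_sub, neg_mul, PowerSeries.inv_mul_cancel u h0]; ring
  rw [h2]
  exact h1.mul_left _

theorem PowerSeries.coeff_inv_one_sub_X_pow {w : ℕ} (hw : w ≠ 0) (n : ℕ) :
    PowerSeries.coeff n ((1 : PowerSeries ℚ) - PowerSeries.X ^ w)⁻¹ = if w ∣ n then 1 else 0 := by
  have h : (PowerSeries.mk fun n => if w ∣ n then (1 : ℚ) else 0) =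
      ((1 : PowerSeries ℚ) - PowerSeries.X ^ w)⁻¹ := by
    rw [PowerSeries.eq_inv_iff_mul_eq_one
      (by rw [PowerSeries.constantCoeff_one_sub_X_pow hw]; exact one_ne_zero)]
    ext n
    rw [mul_sub, mul_one, map_sub, PowerSeries.coeff_mul_X_pow', PowerSeries.coeff_mk,
      PowerSeries.coeff_one]
    rcases eq_or_ne n 0 with rfl | hn
    · simp [hw]
    · rw [if_neg hn]
      split_ifs with h1 h2 h2
      · rw [PowerSeries.coeff_mk, if_pos (Nat.dvd_sub h1 dvd_rfl), sub_self]
      · exact absurd (Nat.le_of_dvd (Nat.pos_of_ne_zero hn) h1) h2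
      · rw [PowerSeries.coeff_mk, if_neg, sub_self]
        intro h3
        exact h1 (by simpa [Nat.sub_add_cancel h2] using Nat.dvd_add h3 dvd_rfl)
      · rw [sub_self]
  rw [← h, PowerSeries.coeff_mk]

theorem PowerSeries.coeff_prod_inv_one_sub_X_pow {ι : Type*} [DecidableEq ι] (S : Finset ι)
    {w : ι → ℕ} (hw : ∀ i ∈ S, w i ≠ 0) (n : ℕ) :
    PowerSeries.coeff n (∏ i ∈ S, ((1 : PowerSeries ℚ) - PowerSeries.X ^ w i)⁻¹) =
      (((Finset.finsuppAntidiag S n).filter fun l => ∀ i ∈ S, w i ∣ l i).card : ℚ) := by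
  rw [PowerSeries.coeff_prod, Finset.card_filter, Nat.cast_sum]
  refine Finset.sum_congr rfl fun l _ => ?_
  rw [Finset.prod_congr rfl fun i hi => PowerSeries.coeff_inv_one_sub_X_pow (hw i hi) (l i),
    Finset.prod_ite_zero]
  simp

end Series

section BlockCounting

variable {F : Type*} [Field F] {σ : F →+* F} {M : ℕ}

theorem Polynomial.finite_setOf_natDegree_le [Finite F] (N : ℕ) :
    {f : F[X] | f.natDegree ≤ N}.Finite := by
  refine Set.Finite.of_injOn (f := fun (f : F[X]) (i : Fin (N + 1)) => f.coeff i)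
    (t := Set.univ) (fun _ _ => Set.mem_univ _) ?_ Set.finite_univ
  intro f hf g hg h
  ext k
  rcases Nat.lt_or_ge k (N + 1) with hk | hk
  · exact congrFun h ⟨k, hk⟩
  · rw [coeff_eq_zero_of_natDegree_lt (lt_of_le_of_lt hf hk),
      coeff_eq_zero_of_natDegree_lt (lt_of_le_of_lt hg hk)]

theorem IsPowerBlock.natDegree_ne_zero (hσ : ∀ x, σ (σ x) = x) (hM : M ≠ 0) {P : F[X]}
    (hP : IsPowerBlock σ M P) : P.natDegree ≠ 0 := fun h0 => hP.not_isUnit (by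
  rw [Polynomial.eq_one_of_monic_natDegree_zero (hP.isPowerCharpoly hσ hM).1 h0]; exact isUnit_one)

/-- The number of characteristic polynomials of degree `n` of powers, as a number of block
decompositions. -/
theorem card_isPowerCharpoly_eq [DecidableEq F[X]] (hσ : ∀ x, σ (σ x) = x) (hM : M ≠ 0)
    {S : Finset F[X]} {n : ℕ} (hS : ∀ P ∈ S, IsPowerBlock σ M P)
    (hS' : ∀ P, IsPowerBlock σ M P → P.natDegree ≤ n → P ∈ S) :
    Nat.card {f : F[X] // IsPowerCharpoly σ M f ∧ f.natDegree = n} =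
      ((Finset.finsuppAntidiag S n).filter fun l => ∀ P ∈ S, P.natDegree ∣ l P).card := by
  rw [← Fintype.card_coe, ← Nat.card_eq_fintype_card]
  symm
  have hdeg : ∀ e : F[X] → ℕ, (∏ P ∈ S, P ^ e P).natDegree = ∑ P ∈ S, P.natDegree * e P := by
    intro e
    rw [natDegree_prod_of_monic _ _ fun P hP => ((hS P hP).isPowerCharpoly hσ hM).1.pow _]
    refine Finset.sum_congr rfl fun P hP => ?_
    rw [((hS P hP).isPowerCharpoly hσ hM).1.natDegree_pow, mul_comm]
  refine Nat.card_eq_of_bijective (fun l => ⟨∏ P ∈ S, P ^ (l.1 P / P.natDegree), ?_, ?_⟩) ⟨?_, ?_⟩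
  · exact IsPowerCharpoly.prod S fun P hP => ((hS P hP).isPowerCharpoly hσ hM).pow _
  · obtain ⟨hl, hdvd⟩ := Finset.mem_filter.1 l.2
    rw [hdeg]
    exact (Finset.sum_congr rfl fun P hP => Nat.mul_div_cancel' (hdvd P hP)).trans
      (Finset.mem_finsuppAntidiag.1 hl).1
  · intro l l' h
    obtain ⟨hl, hdvd⟩ := Finset.mem_filter.1 l.2
    obtain ⟨hl', hdvd'⟩ := Finset.mem_filter.1 l'.2
    have h' := exponents_eq_of_prod_blocks_eq hσ hM hS (congrArg Subtype.val h)
    refine Subtype.ext (Finsupp.ext fun P => ?_)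
    by_cases hP : P ∈ S
    · rw [← Nat.mul_div_cancel' (hdvd P hP), h' P hP, Nat.mul_div_cancel' (hdvd' P hP)]
    · rw [Finsupp.notMem_support_iff.1 fun h => hP ((Finset.mem_finsuppAntidiag.1 hl).2 h),
        Finsupp.notMem_support_iff.1 fun h => hP ((Finset.mem_finsuppAntidiag.1 hl').2 h)]
  · rintro ⟨f, hf, rfl⟩
    obtain ⟨e, he, rfl⟩ := hf.exists_prod_blocks hσ hM
    have hsub : e.support ⊆ S := by
      intro P hP
      refine hS' P (he P hP) (natDegree_le_of_dvd ?_ hf.1.ne_zero)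
      exact (dvd_pow_self P (Finsupp.mem_support_iff.1 hP)).trans (Finset.dvd_prod_of_mem _ hP)
    have hprod : e.prod (fun P k => P ^ k) = ∏ P ∈ S, P ^ e P :=
      Finsupp.prod_of_support_subset _ hsub _ fun P _ => pow_zero P
    let l : F[X] →₀ ℕ := Finsupp.onFinset S (fun P => if P ∈ S then P.natDegree * e P else 0)
      (fun P h => by by_contra hP; simp [hP] at h)
    have hl : ∀ P ∈ S, l P = P.natDegree * e P := fun P hP => by simp [l, hP]
    refine ⟨⟨l, Finset.mem_filter.2 ⟨Finset.mem_finsuppAntidiag.2 ⟨?_,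
      Finsupp.support_onFinset_subset⟩, fun P hP => hl P hP ▸ dvd_mul_right _ _⟩⟩, ?_⟩
    · rw [hprod, hdeg]
      exact Finset.sum_congr rfl hl
    · refine Subtype.ext (Eq.trans (Finset.prod_congr rfl fun P hP => ?_) hprod.symm)
      change P ^ (l P / P.natDegree) = _
      rw [hl P hP, Nat.mul_div_cancel_left _
        (Nat.pos_of_ne_zero ((hS P hP).natDegree_ne_zero hσ hM))]

theorem NtildeM_eq_card {S : Finset F[X]} {d : ℕ} (hd : Odd d)
    (hS : ∀ P, P ∈ S ↔ IsPowerBlock σ M P ∧ P.natDegree = d) : NtildeM σ M d = S.card := by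
  refine Nat.subtype_card S fun P => ?_
  rw [hS]
  refine ⟨fun ⟨h, hP⟩ => ⟨?_, hP⟩, fun ⟨h, hP⟩ => ⟨Or.inl h, hP⟩⟩
  rcases h with h | ⟨g, hg, h0, hne, rfl⟩
  · exact h
  · rw [hg.1.natDegree_mul (monic_tildePoly h0), natDegree_tildePoly h0] at hP
    exact absurd hd (by rw [← hP, Nat.not_odd_iff_even]; exact Even.add_self _)

theorem RtildeM_eq_card (hσ : ∀ x, σ (σ x) = x) (hodd : ∀ f : F[X], IsSCIM σ f → Odd f.natDegree)
    {S : Finset F[X]} {d : ℕ} (hS : ∀ P, P ∈ S ↔ IsPowerBlock σ M P ∧ P.natDegree = 2 * d) :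
    RtildeM σ M d = S.card := by
  rw [← Fintype.card_coe, ← Nat.card_eq_fintype_card]
  refine Nat.card_eq_of_bijective (fun Q => ⟨Sym2.mul Q.1, ?_⟩) ⟨?_, ?_⟩
  · obtain ⟨Q, g, hg, h0, hdeg, hne, rfl⟩ := Q
    rw [hS]
    refine ⟨Or.inr ⟨g, hg, h0, hne, Sym2.mul_mk _ _⟩, ?_⟩
    rw [Sym2.mul_mk, hg.1.natDegree_mul (monic_tildePoly h0), natDegree_tildePoly h0, hdeg, two_mul]
  · rintro ⟨_, g, hg, h0, hdeg, hne, rfl⟩ ⟨_, h, hh, hh0, hhdeg, hhne, rfl⟩ heq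
    have heq' : g * tildePoly σ g = h * tildePoly σ h := by simpa using congrArg Subtype.val heq
    have hd : g ∣ h * tildePoly σ h := heq' ▸ dvd_mul_right _ _
    apply Subtype.ext
    have htt := tildePoly_tildePoly hσ hh.1 hh0
    rcases hg.2.1.prime.dvd_or_dvd hd with hd | hd
    · have e := Polynomial.eq_of_monic_of_associated hg.1 hh.1 (hg.2.1.associated_of_dvd hh.2.1 hd)
      simp only [e]
    · have e := Polynomial.eq_of_monic_of_associated hg.1 (monic_tildePoly hh0)
        (hg.2.1.associated_of_dvd (irreducible_tildePoly hσ hh.1 hh0 hh.2.1) hd)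
      simp only [e, htt]
      exact Sym2.eq_swap
  · rintro ⟨P, hP⟩
    obtain ⟨hblock, hdeg⟩ := (hS P).1 hP
    rcases hblock with h | ⟨g, hg, h0, hne, rfl⟩
    · exact absurd (hodd P h.1) (by rw [hdeg, Nat.not_odd_iff_even]; exact even_two_mul d)
    · rw [hg.1.natDegree_mul (monic_tildePoly h0), natDegree_tildePoly h0] at hdeg
      exact ⟨⟨s(g, tildePoly σ g), g, hg, h0, by omega, hne, rfl⟩, Subtype.ext (Sym2.mul_mk _ _)⟩

/-- The finite part of the product formula. -/
theorem prod_blocks_eq [DecidableEq F[X]] (hσ : ∀ x, σ (σ x) = x) (hM : M ≠ 0)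
    (hodd : ∀ f : F[X], IsSCIM σ f → Odd f.natDegree) {N : ℕ} {S : Finset F[X]}
    (hS : ∀ P, P ∈ S ↔ IsPowerBlock σ M P ∧ P.natDegree ≤ 2 * N) :
    (∏ k ∈ Finset.range N, (((1 : PowerSeries ℚ) - PowerSeries.X ^ (2 * k + 1)) ^
        NtildeM σ M (2 * k + 1))⁻¹) *
      ∏ k ∈ Finset.range N, (((1 : PowerSeries ℚ) - PowerSeries.X ^ (2 * (k + 1))) ^
        RtildeM σ M (k + 1))⁻¹ =
      ∏ P ∈ S, ((1 : PowerSeries ℚ) - PowerSeries.X ^ P.natDegree)⁻¹ := by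
  have h0 : ∀ P ∈ S, P.natDegree ≠ 0 := fun P hP => ((hS P).1 hP).1.natDegree_ne_zero hσ hM
  rw [← Finset.prod_filter_mul_prod_filter_not S (fun P => Odd P.natDegree)]
  congr 1
  · rw [← Finset.prod_fiberwise_of_maps_to (s := S.filter fun P => Odd P.natDegree)
      (t := Finset.range N) (g := fun P => P.natDegree / 2)
      (fun P hP => by
        obtain ⟨hP, c, hc⟩ := Finset.mem_filter.1 hP
        have := ((hS P).1 hP).2
        rw [Finset.mem_range]
        omega)]
    refine Finset.prod_congr rfl fun k hk => ?_
    rw [Finset.mem_range] at hk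
    have hfib : ∀ P, P ∈ ((S.filter fun P => Odd P.natDegree).filter fun P => P.natDegree / 2 = k) ↔
        IsPowerBlock σ M P ∧ P.natDegree = 2 * k + 1 := by
      intro P
      rw [Finset.mem_filter, Finset.mem_filter, hS]
      constructor
      · rintro ⟨⟨⟨hb, -⟩, c, hc⟩, hk'⟩
        exact ⟨hb, by omega⟩
      · rintro ⟨hb, hd⟩
        exact ⟨⟨⟨hb, by omega⟩, k, hd⟩, by omega⟩
    rw [Finset.prod_congr rfl fun P hP => by rw [((hfib P).1 hP).2], Finset.prod_const,
      PowerSeries.inv_pow_one_sub_X_pow, NtildeM_eq_card ⟨k, rfl⟩ hfib]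
  · rw [← Finset.prod_fiberwise_of_maps_to (s := S.filter fun P => ¬Odd P.natDegree)
      (t := Finset.range N) (g := fun P => P.natDegree / 2 - 1)
      (fun P hP => by
        obtain ⟨hP, hc⟩ := Finset.mem_filter.1 hP
        obtain ⟨c, hc⟩ := Nat.not_odd_iff_even.1 hc
        have := ((hS P).1 hP).2
        have := h0 P hP
        rw [Finset.mem_range]
        omega)]
    refine Finset.prod_congr rfl fun k hk => ?_
    rw [Finset.mem_range] at hk
    have hfib : ∀ P, P ∈ ((S.filter fun P => ¬Odd P.natDegree).filter
        fun P => P.natDegree / 2 - 1 = k) ↔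
        IsPowerBlock σ M P ∧ P.natDegree = 2 * (k + 1) := by
      intro P
      rw [Finset.mem_filter, Finset.mem_filter]
      constructor
      · rintro ⟨⟨hP, hc⟩, hk'⟩
        obtain ⟨c, hc⟩ := Nat.not_odd_iff_even.1 hc
        have := h0 P hP
        exact ⟨((hS P).1 hP).1, by omega⟩
      · rintro ⟨hb, hd⟩
        refine ⟨⟨(hS P).2 ⟨hb, by omega⟩, ?_⟩, by omega⟩
        rw [hd, Nat.not_odd_iff_even]
        exact even_two_mul _
    rw [Finset.prod_congr rfl fun P hP => by rw [((hfib P).1 hP).2], Finset.prod_const,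
      PowerSeries.inv_pow_one_sub_X_pow, RtildeM_eq_card hσ hodd hfib]

end BlockCounting

/-- Generating function for the conjugacy classes of cyclic `M`-th powers in `U(n,q²)`.
Odd `d` are enumerated as `2k+1` and `d ≥ 1` as `k+1`; a negative exponent is the inverse in
`ℚ[[z]]` of a series with constant term `1`. -/
theorem statement9 (p ℓ q : ℕ) (hp : p.Prime) (hℓ : 0 < ℓ) (hq : q = p ^ ℓ)
    (F : Type*) [Field F] [Fintype F] (hF : Fintype.card F = q ^ 2)
    (σ : F →+* F) (hσ : ∀ x : F, σ x = x ^ q)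
    (M : ℕ) (hM : 2 ≤ M) (hMq : M.Coprime q) :
    Multipliable (fun k : ℕ => (((1 : PowerSeries ℚ) - PowerSeries.X ^ (2 * k + 1)) ^
        NtildeM σ M (2 * k + 1))⁻¹) ∧
    Multipliable (fun k : ℕ => (((1 : PowerSeries ℚ) - PowerSeries.X ^ (2 * (k + 1))) ^
        RtildeM σ M (k + 1))⁻¹) ∧
    (PowerSeries.mk fun n => if n = 0 then (1 : ℚ) else (numCycPowerClasses σ M n : ℚ)) =
      (∏' k : ℕ, (((1 : PowerSeries ℚ) - PowerSeries.X ^ (2 * k + 1)) ^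
          NtildeM σ M (2 * k + 1))⁻¹) *
      ∏' k : ℕ, (((1 : PowerSeries ℚ) - PowerSeries.X ^ (2 * (k + 1))) ^
          RtildeM σ M (k + 1))⁻¹ := by
  subst hq
  have : Fact p.Prime := ⟨hp⟩
  have hchar : CharP F p := by
    obtain ⟨r, hr⟩ := CharP.exists F
    obtain ⟨k, hrp, hk⟩ := FiniteField.card F r
    rw [hF, ← pow_mul] at hk
    have h1 : p ∣ r ^ (k : ℕ) := hk ▸ dvd_pow_self p (by omega)
    rwa [(Nat.prime_dvd_prime_iff_eq hp hrp).1 (hp.dvd_of_dvd_pow h1)]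
  have hσσ : ∀ x, σ (σ x) = x := fun x => by
    rw [hσ, hσ, ← pow_mul, ← sq, ← hF, FiniteField.pow_card]
  have hq1 : 1 < p ^ ℓ := Nat.one_lt_pow hℓ.ne' hp.one_lt
  obtain ⟨l, hl⟩ : ∃ l : F, σ l ≠ l := by
    by_contra hcon
    push Not at hcon
    have hne : (X ^ p ^ ℓ - X : F[X]) ≠ 0 := FiniteField.X_pow_card_sub_X_ne_zero F hq1
    have hcard : Fintype.card F ≤ (X ^ p ^ ℓ - X : F[X]).natDegree := by
      classical
      refine Polynomial.card_le_degree_of_subset_roots (Z := Finset.univ) fun x _ => ?_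
      rw [Polynomial.mem_roots hne, IsRoot.def, eval_sub, eval_pow, eval_X, ← hσ, hcon, sub_self]
    rw [FiniteField.X_pow_card_sub_X_natDegree_eq F hq1, hF] at hcard
    nlinarith
  have hMp : M.Coprime p := Nat.Coprime.coprime_dvd_right (dvd_pow_self p hℓ.ne') hMq
  have hodd : ∀ f : F[X], IsSCIM σ f → Odd f.natDegree := fun f hf => hf.odd_natDegree hF hσ
  have hM0 : M ≠ 0 := by omega
  have hd1 : ∀ k, PowerSeries.X ^ (k + 1) ∣ (((1 : PowerSeries ℚ) -
      PowerSeries.X ^ (2 * k + 1)) ^ NtildeM σ M (2 * k + 1))⁻¹ - 1 := fun k =>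
    (pow_dvd_pow _ (by omega)).trans (PowerSeries.X_pow_dvd_inv_sub_one (by omega) _)
  have hd2 : ∀ k, PowerSeries.X ^ (k + 1) ∣ (((1 : PowerSeries ℚ) -
      PowerSeries.X ^ (2 * (k + 1))) ^ RtildeM σ M (k + 1))⁻¹ - 1 := fun k =>
    (pow_dvd_pow _ (by omega)).trans (PowerSeries.X_pow_dvd_inv_sub_one (by omega) _)
  refine ⟨PowerSeries.multipliable_of_X_pow_dvd hd1, PowerSeries.multipliable_of_X_pow_dvd hd2, ?_⟩
  ext n
  classical
  have hfin : {P : F[X] | IsPowerBlock σ M P ∧ P.natDegree ≤ 2 * (n + 1)}.Finite :=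
    (Polynomial.finite_setOf_natDegree_le (2 * (n + 1))).subset fun P hP => hP.2
  have hS : ∀ P, P ∈ hfin.toFinset ↔ IsPowerBlock σ M P ∧ P.natDegree ≤ 2 * (n + 1) :=
    fun P => hfin.mem_toFinset
  have hcoeff : PowerSeries.coeff n ((∏' k : ℕ, (((1 : PowerSeries ℚ) -
      PowerSeries.X ^ (2 * k + 1)) ^ NtildeM σ M (2 * k + 1))⁻¹) *
      ∏' k : ℕ, (((1 : PowerSeries ℚ) - PowerSeries.X ^ (2 * (k + 1))) ^
          RtildeM σ M (k + 1))⁻¹) =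
      (Nat.card {f : F[X] // IsPowerCharpoly σ M f ∧ f.natDegree = n} : ℚ) := by
    rw [card_isPowerCharpoly_eq hσσ hM0 (fun P hP => ((hS P).1 hP).1)
        (fun P hP hd => (hS P).2 ⟨hP, by omega⟩),
      ← PowerSeries.coeff_prod_inv_one_sub_X_pow _
        (fun P hP => ((hS P).1 hP).1.natDegree_ne_zero hσσ hM0),
      ← prod_blocks_eq hσσ hM0 hodd hS, PowerSeries.coeff_mul, PowerSeries.coeff_mul]
    refine Finset.sum_congr rfl fun ij hij => ?_
    rw [Finset.HasAntidiagonal.mem_antidiagonal] at hij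
    rw [PowerSeries.coeff_tprod_of_X_pow_dvd hd1 (N := n + 1) (by omega),
      PowerSeries.coeff_tprod_of_X_pow_dvd hd2 (N := n + 1) (by omega)]
  rw [hcoeff, PowerSeries.coeff_mk]
  split_ifs with hn
  · subst hn
    rw [← Nat.cast_one, Nat.cast_inj, eq_comm, Nat.card_eq_one_iff_unique]
    refine ⟨⟨fun f g => Subtype.ext ?_⟩, ⟨1, isPowerCharpoly_one, natDegree_one⟩⟩
    rw [Polynomial.eq_one_of_monic_natDegree_zero f.2.1.1 f.2.2,
      Polynomial.eq_one_of_monic_natDegree_zero g.2.1.1 g.2.2]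
  · rw [numCycPowerClasses_eq_card (p := p) hσσ hl hM hMp]
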